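/- arXiv:1111.5366 — 4 statements merged into one kernel-verified Lean document; each statement's English description precedes it below -/
import Mathlib

section
/- For all ξ, δ ∈ ℂ with ξ, δ, ξ+δ ∉ Λ and ℘(ξ) ≠ ℘(δ), one has ζ(ξ+δ) − ζ(ξ) − ζ(δ) = (1/2)·(℘′(ξ) − ℘′(δ))/(℘(ξ) − ℘(δ)). -/
open scoped BigOperators

noncomputable section

/-- A period lattice in `ℂ` spanned by two `ℝ`-independent periods. -/
structure EllLattice where
  ω₁ : ℂ
  ω₂ : ℂ
  indep : ∀ a b : ℝ, a • ω₁ + b • ω₂ = 0 → a = 0 ∧ b = 0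

namespace EllLattice

/-- Membership in the lattice `Λ = ℤω₁ + ℤω₂`. -/
def mem (L : EllLattice) (z : ℂ) : Prop := ∃ m n : ℤ, z = m • L.ω₁ + n • L.ω₂

/-- The lattice point with integer coordinates `p = (m, n)`. -/
def per (L : EllLattice) (p : ℤ × ℤ) : ℂ := p.1 • L.ω₁ + p.2 • L.ω₂

/-- The Weierstrass sigma function associated to the lattice, defined by its
Hadamard product over the nonzero lattice points. -/
def sigma (L : EllLattice) (z : ℂ) : ℂ :=
  z * ∏' p : {p : ℤ × ℤ // p ≠ 0},
      ((1 - z / L.per p.1) *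
        Complex.exp (z / L.per p.1 + z ^ 2 / (2 * (L.per p.1) ^ 2)))

/-- The Weierstrass zeta function `ζ = σ′/σ`. -/
def zeta (L : EllLattice) (z : ℂ) : ℂ := deriv L.sigma z / L.sigma z

/-- The Weierstrass `℘`-function `℘ = −ζ′`. -/
def wp (L : EllLattice) (z : ℂ) : ℂ := - deriv L.zeta z

/-- `Φ_ξ(κ) = σ(ξ+κ)/(σ(ξ)σ(κ))`. -/
def Phi (L : EllLattice) (ξ κ : ℂ) : ℂ := L.sigma (ξ + κ) / (L.sigma ξ * L.sigma κ)

/-- The Lamé function `Ψ_ξ(κ) = Φ_ξ(κ)·e^{−ζ(ξ)κ}`. -/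
def Psi (L : EllLattice) (ξ κ : ℂ) : ℂ := L.Phi ξ κ * Complex.exp (-(L.zeta ξ) * κ)

/-- `η_δ(ξ) = ζ(ξ+δ) − ζ(ξ) − ζ(δ)`. -/
def eta (L : EllLattice) (δ ξ : ℂ) : ℂ := L.zeta (ξ + δ) - L.zeta ξ - L.zeta δ

/-- `χ_{α,β}(ξ) = ζ(α) + ζ(β) + ζ(ξ) − ζ(ξ+α+β)`. -/
def chi (L : EllLattice) (α β ξ : ℂ) : ℂ :=
  L.zeta α + L.zeta β + L.zeta ξ - L.zeta (ξ + α + β)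

end EllLattice

open Filter Topology PeriodPair

namespace WZ

variable (P : PeriodPair)

/-- The regular part at `0` of the Weierstrass zeta function. -/
def h (z : ℂ) : ℂ :=
  ∑' l : P.lattice, if l.1 = 0 then 0 else (1 / (z - l) + 1 / l + z / l ^ 2)

/-- The Weierstrass zeta function attached to a period pair. -/
def Z (z : ℂ) : ℂ := 1 / z + h P z

lemma h_zero : h P 0 = 0 := by
  unfold h
  convert tsum_zero with l
  split_ifs
  · rfl
  · simp [one_div, inv_neg]

lemma hasSumLU_h : HasSumLocallyUniformly
    (fun (l : P.lattice) (z : ℂ) ↦ if l.1 = 0 then 0 else (1 / (z - l) + 1 / l + z / (l : ℂ) ^ 2))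
    (h P) := by
  refine P.hasSumLocallyUniformly_aux (u := fun r l ↦ 2 * r ^ 2 * ‖l‖ ^ (-3 : ℝ)) _
    (fun _ _ ↦ (ZLattice.summable_norm_rpow _ _ (by simp; norm_num)).mul_left _) fun r hr ↦
    Filter.eventually_atTop.mpr ⟨2 * r, ?_⟩
  rintro _ h s hs l rfl
  split_ifs with h0
  · simp only [norm_zero]; positivity
  have hsl : s - l ≠ 0 := by
    intro e
    rw [sub_eq_zero.mp e] at hs
    have := norm_nonneg (l : ℂ)
    linarith
  have hl : 0 < ‖(l : ℂ)‖ := norm_pos_iff.mpr h0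
  have e : 1 / (s - l) + 1 / l + s / (l : ℂ) ^ 2 = s ^ 2 / (l ^ 2 * (s - l)) := by
    field_simp
    ring
  rw [e, norm_div, norm_mul, norm_pow, norm_pow]
  have h1 : ‖(l : ℂ)‖ / 2 ≤ ‖s - l‖ := by
    rw [norm_sub_rev]
    exact le_trans (by linarith) (norm_sub_norm_le _ _)
  have e2 : ‖l‖ ^ (-3 : ℝ) = 1 / ‖(l : ℂ)‖ ^ 3 := by
    rw [one_div, Real.rpow_neg (by positivity)]
    norm_cast
  rw [e2]
  calc ‖s‖ ^ 2 / (‖(l : ℂ)‖ ^ 2 * ‖s - l‖) ≤ r ^ 2 / (‖(l : ℂ)‖ ^ 2 * (‖(l : ℂ)‖ / 2)) := by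
        gcongr
    _ = _ := by field_simp

lemma eqOn_deriv_h : Set.EqOn (deriv (h P)) (fun z ↦ -℘[P - (0 : ℂ)] z) (P.lattice \ {0})ᶜ := by
  have hne : ∀ (x : P.lattice), ¬ x.1 = 0 → ∀ l ∈ ((P.lattice : Set ℂ) \ {0})ᶜ, l - x.1 ≠ 0 := by
    intro x hx l hl e
    obtain rfl := sub_eq_zero.mp e
    simp_all
  refine ((hasSumLU_h P).tendstoLocallyUniformlyOn.deriv
    (.of_forall fun s ↦ ?_) P.isOpen_compl_lattice_sdiff).unique ?_
  · refine .fun_sum fun i hi ↦ ?_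
    split_ifs with hi0
    · simp
    exact .add (.add (.div (by fun_prop) (by fun_prop) (hne i hi0)) (by fun_prop)) (by fun_prop)
  · have := ((P.hasSumLocallyUniformly_weierstrassPExcept 0).tendstoLocallyUniformlyOn
      (s := (P.lattice \ {0})ᶜ)).neg
    refine this.congr ?_
    intro s l hl
    simp only [Function.comp_apply, Pi.neg_apply]
    rw [deriv_fun_sum]
    · rw [← Finset.sum_neg_distrib]
      refine Finset.sum_congr rfl fun x _ ↦ ?_
      split_ifs with hx
      · simp
      have h1 := hne x hx l hl
      have hd : HasDerivAt (fun z : ℂ ↦ 1 / (z - x) + 1 / x + z / (x : ℂ) ^ 2)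
          (-1 / (l - x) ^ 2 + 1 / (x : ℂ) ^ 2) l := by
        have := ((((hasDerivAt_id l).sub_const (x : ℂ)).inv h1).add_const (1 / (x : ℂ))).add
          ((hasDerivAt_id l).div_const ((x : ℂ) ^ 2))
        simpa [one_div] using! this
      rw [hd.deriv]
      ring
    · intro x _
      split_ifs with hx
      · simp
      have h1 := hne x hx l hl
      exact .add (.add (.div (by fun_prop) (by fun_prop) h1) (by fun_prop)) (by fun_prop)

lemma differentiableOn_h : DifferentiableOn ℂ (h P) (P.lattice \ {0})ᶜ := by
  have hne : ∀ (x : P.lattice), ¬ x.1 = 0 → ∀ l ∈ ((P.lattice : Set ℂ) \ {0})ᶜ, l - x.1 ≠ 0 := by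
    intro x hx l hl e
    obtain rfl := sub_eq_zero.mp e
    simp_all
  refine (hasSumLU_h P).tendstoLocallyUniformlyOn.differentiableOn
    (.of_forall fun s ↦ .fun_sum fun i hi ↦ ?_) P.isOpen_compl_lattice_sdiff
  split_ifs with hi0
  · simp
  exact .add (.add (.div (by fun_prop) (by fun_prop) (hne i hi0)) (by fun_prop)) (by fun_prop)

lemma hasDerivAt_h {z : ℂ} (hz : z ∈ ((P.lattice : Set ℂ) \ {0})ᶜ) :
    HasDerivAt (h P) (-℘[P - (0 : ℂ)] z) z := by
  have := ((differentiableOn_h P).differentiableAt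
    (P.isOpen_compl_lattice_sdiff.mem_nhds hz)).hasDerivAt
  rwa [eqOn_deriv_h P hz] at this

lemma ne_zero_of_notMem {z : ℂ} (hz : z ∉ P.lattice) : z ≠ 0 := by
  rintro rfl; exact hz (zero_mem _)

lemma hasDerivAt_Z {z : ℂ} (hz : z ∉ P.lattice) : HasDerivAt (Z P) (-℘[P] z) z := by
  have h0 := ne_zero_of_notMem P hz
  have := (hasDerivAt_inv h0).add (hasDerivAt_h P (z := z) (by simp [hz]))
  have e := P.weierstrassPExcept_add 0 z
  simp only [ZeroMemClass.coe_zero, sub_zero] at e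
  have e1 : Z P = (fun y => y⁻¹) + h P := by ext w; simp [Z]
  have e2 : -℘[P] z = -(z ^ 2)⁻¹ + -℘[P - (0 : ℂ)] z := by rw [← e]; simp
  rw [e1, e2]
  exact this

lemma analyticAt_Z {z : ℂ} (hz : z ∉ P.lattice) : AnalyticAt ℂ (Z P) z := by
  rw [Complex.analyticAt_iff_eventually_differentiableAt]
  filter_upwards [P.isClosed_lattice.isOpen_compl.mem_nhds hz] with w hw
  exact (hasDerivAt_Z P hw).differentiableAt

lemma analyticAt_h {z : ℂ} (hz : z ∈ ((P.lattice : Set ℂ) \ {0})ᶜ) : AnalyticAt ℂ (h P) z :=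
  (differentiableOn_h P).analyticAt (P.isOpen_compl_lattice_sdiff.mem_nhds hz)

lemma Z_add_coe (l : P.lattice) : ∃ c : ℂ, ∀ z, z ∉ P.lattice → Z P (z + l) = Z P z + c := by
  have hc : IsPreconnected ((P.lattice : Set ℂ)ᶜ) := by
    refine (Set.Countable.isConnected_compl_of_one_lt_rank (by simp) ?_).2
    have : Countable P.lattice := P.latticeEquivProd.toEquiv.countable_iff.mpr inferInstance
    exact Set.to_countable (α := ℂ) (P.lattice : Set ℂ)
  have hd : ∀ z, z ∉ P.lattice → HasDerivAt (fun z ↦ Z P (z + l) - Z P z) 0 z := by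
    intro z hz
    have hz' : z + l ∉ P.lattice := fun hh ↦ hz (by simpa using sub_mem hh l.2)
    have := ((hasDerivAt_Z P hz').comp_add_const z (l : ℂ)).sub (hasDerivAt_Z P hz)
    simpa using! this
  obtain ⟨c, hc⟩ := P.isClosed_lattice.isOpen_compl.exists_is_const_of_deriv_eq_zero hc
    (f := fun z ↦ Z P (z + l) - Z P z) (fun z hz ↦ (hd z hz).differentiableAt.differentiableWithinAt)
    (fun z hz ↦ (hd z hz).deriv)
  exact ⟨c, fun z hz ↦ by rw [← hc z hz]; ring⟩

end WZ
open Filter Topology PeriodPair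

namespace WZ

variable (P : PeriodPair)

/-- Elementary factor of the sigma product. -/
def E (l : ℂ) (z : ℂ) : ℂ := (1 - z / l) * Complex.exp (z / l + z ^ 2 / (2 * l ^ 2))

lemma norm_E_sub_one_le {u : ℂ} (hu : ‖u‖ ≤ 1 / 2) :
    ‖(1 - u) * Complex.exp (u + u ^ 2 / 2) - 1‖ ≤ 2 * ‖u‖ ^ 3 := by
  have h1 := Complex.norm_log_sub_logTaylor_le 2 (z := -u) (by rw [norm_neg]; linarith)
  simp only [Complex.logTaylor_succ, Complex.logTaylor_zero, norm_neg] at h1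
  have hne : 1 + -u ≠ 0 := by
    intro e
    have : u = 1 := by linear_combination -e
    rw [this] at hu; norm_num at hu
  set v := Complex.log (1 + -u) + (u + u ^ 2 / 2) with hv
  have hv1 : ‖v‖ ≤ ‖u‖ ^ 3 := by
    have e : v = Complex.log (1 + -u) - (0 + (-1) ^ (0 + 1) * (-u) ^ 0 / ((0 : ℕ) : ℂ) +
      (-1) ^ (1 + 1) * (-u) ^ 1 / ((1 : ℕ) : ℂ) + (-1) ^ (2 + 1) * (-u) ^ 2 / ((2 : ℕ) : ℂ)) := by
      rw [hv]; push_cast; simp; ring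
    have h2 : (1 - ‖u‖)⁻¹ ≤ 2 := by
      rw [inv_le_comm₀ (by linarith) (by norm_num)]; linarith
    have h3 : 0 ≤ ‖u‖ ^ 3 := by positivity
    rw [e]
    refine le_trans (by simpa using h1) ?_
    norm_num
    nlinarith
  have hv2 : ‖v‖ ≤ 1 := hv1.trans (pow_le_one₀ (norm_nonneg _) (by linarith))
  have e2 : (1 - u) * Complex.exp (u + u ^ 2 / 2) = Complex.exp v := by
    rw [hv, Complex.exp_add (Complex.log _), Complex.exp_log hne]; ring
  rw [e2]
  refine (Complex.norm_exp_sub_one_le hv2).trans ?_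
  linarith

lemma summable_bound (r : ℝ) : Summable fun l : P.lattice ↦ 2 * r ^ 3 * ‖l‖ ^ (-3 : ℝ) :=
  (ZLattice.summable_norm_rpow _ _ (by simp; norm_num)).mul_left _

lemma bound_E (r : ℝ) : ∀ᶠ l : P.lattice in cofinite, ∀ z ∈ Metric.ball (0 : ℂ) r,
    ‖E l z - 1‖ ≤ 2 * r ^ 3 * ‖l‖ ^ (-3 : ℝ) := by
  refine (isCompact_iff_finite.mp (isCompact_closedBall (0 : P.lattice) (2 * r))).subset ?_
  intro l hl
  simp only [Metric.mem_closedBall, dist_zero_right]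
  by_contra hcon
  apply hl
  intro z hz
  replace hcon : 2 * r < ‖(l : ℂ)‖ := not_le.mp hcon
  have hz' : ‖z‖ < r := by simpa using hz
  have hl0 : 0 < ‖(l : ℂ)‖ := by have := norm_nonneg z; linarith
  have hu : ‖z / l‖ ≤ 1 / 2 := by
    rw [norm_div, div_le_iff₀ hl0]; linarith
  have e2 : ‖l‖ ^ (-3 : ℝ) = 1 / ‖(l : ℂ)‖ ^ 3 := by
    rw [one_div, Real.rpow_neg (by positivity)]
    norm_cast
  have := norm_E_sub_one_le hu
  have e : E l z = (1 - z / l) * Complex.exp (z / l + (z / l) ^ 2 / 2) := by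
    unfold E
    congr 3
    rw [div_pow, div_div, mul_comm]
  rw [e, e2]
  refine this.trans ?_
  rw [norm_div, div_pow, mul_assoc, mul_one_div]
  gcongr

lemma differentiable_E (l : ℂ) : Differentiable ℂ (E l) := by
  unfold E
  fun_prop

lemma mult_E (r : ℝ) : MultipliableLocallyUniformlyOn (fun (l : P.lattice) z ↦ E l z)
    (Metric.ball (0 : ℂ) r) := by
  have := Summable.multipliableLocallyUniformlyOn_one_add (f := fun (l : P.lattice) z ↦ E l z - 1)
    Metric.isOpen_ball (summable_bound P r) (bound_E P r)
    (fun l ↦ ((differentiable_E l).continuous.sub continuous_const).continuousOn)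
  simpa using this

/-- The infinite product, without the factor `z`. -/
def F (z : ℂ) : ℂ := ∏' l : P.lattice, E l z

lemma differentiable_F : Differentiable ℂ (F P) := by
  intro z
  have h := (mult_E P (‖z‖ + 1)).hasProdLocallyUniformlyOn
  have := h.differentiableOn (.of_forall fun s ↦
    DifferentiableOn.fun_finsetProd fun i _ ↦ (differentiable_E i).differentiableOn)
    Metric.isOpen_ball
  exact this.differentiableAt (Metric.isOpen_ball.mem_nhds (by simp))

lemma E_ne_zero {z : ℂ} (hz : z ∈ ((P.lattice : Set ℂ) \ {0})ᶜ) (l : P.lattice) : E l z ≠ 0 := by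
  unfold E
  refine mul_ne_zero ?_ (Complex.exp_ne_zero _)
  intro e
  by_cases h0 : (l : ℂ) = 0
  · simp [h0] at e
  · field_simp at e
    have : z = l := by linear_combination -e
    subst this
    simp [h0] at hz

lemma F_ne_zero {z : ℂ} (hz : z ∈ ((P.lattice : Set ℂ) \ {0})ᶜ) : F P z ≠ 0 := by
  have := tprod_one_add_ne_zero_of_summable (f := fun l : P.lattice ↦ E l z - 1)
    (by simpa using E_ne_zero P hz)
    ((summable_bound P (‖z‖ + 1)).of_norm_bounded_eventually (by
      filter_upwards [bound_E P (‖z‖ + 1)] with l hl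
      simpa using hl z (by simp)))
  simpa [F] using this

lemma logDeriv_E {z : ℂ} (hz : z ∈ ((P.lattice : Set ℂ) \ {0})ᶜ) (l : P.lattice) :
    logDeriv (E l) z = if l.1 = 0 then 0 else (1 / (z - l) + 1 / l + z / (l : ℂ) ^ 2) := by
  split_ifs with h0
  · have : E l = fun _ ↦ 1 := by ext; simp [E, h0]
    rw [this]; simp [logDeriv]
  have hE := E_ne_zero P hz l
  have hzl : z - l ≠ 0 := by
    intro e
    obtain rfl := sub_eq_zero.mp e
    simp [h0] at hz
  have hd : HasDerivAt (E l) ((-(1 / (l : ℂ))) * Complex.exp (z / l + z ^ 2 / (2 * l ^ 2)) +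
      (1 - z / l) * (Complex.exp (z / l + z ^ 2 / (2 * l ^ 2)) *
        (1 / l + (2 * z) / (2 * l ^ 2)))) z := by
    have h1 : HasDerivAt (fun z : ℂ ↦ 1 - z / l) (-(1 / (l : ℂ))) z := by
      simpa using! ((hasDerivAt_id z).div_const (l : ℂ)).const_sub 1
    have h2 : HasDerivAt (fun z : ℂ ↦ z / l + z ^ 2 / (2 * l ^ 2))
        (1 / (l : ℂ) + (2 * z) / (2 * l ^ 2)) z := by
      simpa using! ((hasDerivAt_id z).div_const (l : ℂ)).add
        ((hasDerivAt_pow 2 z).div_const (2 * (l : ℂ) ^ 2))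
    exact h1.mul h2.cexp
  rw [logDeriv_apply, hd.deriv, E]
  have hx := Complex.exp_ne_zero (z / l + z ^ 2 / (2 * (l : ℂ) ^ 2))
  set X := Complex.exp (z / l + z ^ 2 / (2 * (l : ℂ) ^ 2))
  have hzl' : (l : ℂ) - z ≠ 0 := by rw [← neg_sub]; exact neg_ne_zero.mpr hzl
  have h3 : 1 - z / (l : ℂ) ≠ 0 := by
    rw [one_sub_div h0]; exact div_ne_zero hzl' h0
  have h4 : 1 - z / (l : ℂ) = - (z - l) / l := by field_simp; ring
  rw [h4]
  field_simp
  ring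

lemma logDeriv_F {z : ℂ} (hz : z ∈ ((P.lattice : Set ℂ) \ {0})ᶜ) : logDeriv (F P) z = h P z := by
  have := logDeriv_tprod_eq_tsum (f := fun (l : P.lattice) ↦ E l) (s := Metric.ball 0 (‖z‖ + 1))
    (x := z) Metric.isOpen_ball (by simp) (E_ne_zero P hz)
    (fun l ↦ (differentiable_E l).differentiableOn)
    (by
      simp_rw [logDeriv_E P hz]
      exact (hasSumLU_h P).hasSum.summable)
    (mult_E P _) (F_ne_zero P hz)
  unfold h F
  rw [this]
  simp_rw [logDeriv_E P hz]

end WZ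

namespace WZ

variable (L : EllLattice)

/-- The period pair of an `EllLattice`. -/
def pp : PeriodPair where
  ω₁ := L.ω₁
  ω₂ := L.ω₂
  indep := LinearIndependent.pair_iff.mpr L.indep

lemma mem_iff (z : ℂ) : L.mem z ↔ z ∈ (pp L).lattice := by
  rw [PeriodPair.mem_lattice]
  simp [EllLattice.mem, pp, eq_comm]

lemma sigma_eq (z : ℂ) : L.sigma z = z * F (pp L) z := by
  unfold EllLattice.sigma F
  congr 1
  rw [← (pp L).latticeEquivProd.symm.toEquiv.tprod_eq]
  have e : ∀ p : ℤ × ℤ, (((pp L).latticeEquivProd.symm.toEquiv p : (pp L).lattice) : ℂ)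
      = L.per p := by
    intro p
    have := (pp L).latticeEquiv_symm_apply p
    simpa [EllLattice.per, pp] using! this
  simp_rw [e]
  refine (tprod_subtype_eq_of_mulSupport_subset (s := {p : ℤ × ℤ | p ≠ 0})
    (f := fun p ↦ E (L.per p) z) ?_)
  intro p hp
  simp only [Set.mem_ofPred_eq]
  rintro rfl
  apply hp
  simp [E, EllLattice.per]

lemma zeta_eq {z : ℂ} (hz : z ∉ (pp L).lattice) : L.zeta z = Z (pp L) z := by
  have hs : L.sigma = fun z ↦ z * F (pp L) z := funext (sigma_eq L)
  have h0 := ne_zero_of_notMem _ hz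
  have hz' : z ∈ (((pp L).lattice : Set ℂ) \ {0})ᶜ := by simp [hz]
  have e : L.zeta z = logDeriv L.sigma z := rfl
  rw [e, hs, logDeriv_mul z h0 (F_ne_zero _ hz') differentiableAt_fun_id
    (differentiable_F (pp L) z), logDeriv_F _ hz', Z]
  simp [logDeriv_apply]

lemma zeta_eventuallyEq {z : ℂ} (hz : z ∉ (pp L).lattice) : L.zeta =ᶠ[𝓝 z] Z (pp L) := by
  filter_upwards [(pp L).isClosed_lattice.isOpen_compl.mem_nhds hz] with w hw
  exact zeta_eq L hw

lemma wp_eq {z : ℂ} (hz : z ∉ (pp L).lattice) : L.wp z = ℘[pp L] z := by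
  rw [EllLattice.wp, (zeta_eventuallyEq L hz).deriv_eq, (hasDerivAt_Z _ hz).deriv, neg_neg]

lemma deriv_wp_eq {z : ℂ} (hz : z ∉ (pp L).lattice) : deriv L.wp z = ℘'[pp L] z := by
  rw [← deriv_weierstrassP]
  refine EventuallyEq.deriv_eq ?_
  filter_upwards [(pp L).isClosed_lattice.isOpen_compl.mem_nhds hz] with w hw
  exact wp_eq L hw

end WZ
namespace WZ

variable (P : PeriodPair)

lemma liouville (H : ℂ → ℂ) (hloc : ∀ a, ∃ K, AnalyticAt ℂ K a ∧ H =ᶠ[𝓝[≠] a] K)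
    (hper : ∀ l ∈ P.lattice, ∀ a, ∀ᶠ z in 𝓝[≠] a, H (z + l) = H z)
    (h0 : Tendsto H (𝓝[≠] 0) (𝓝 0)) (a : ℂ) (ha : ContinuousAt H a) : H a = 0 := by
  let G : ℂ → ℂ := fun a ↦ limUnder (𝓝[≠] a) H
  have hG : ∀ a c, Tendsto H (𝓝[≠] a) (𝓝 c) → G a = c := fun a c h ↦ h.limUnder_eq
  have hlim : ∀ a K, AnalyticAt ℂ K a → H =ᶠ[𝓝[≠] a] K → G a = K a := by
    intro a K hK hHK
    exact hG a _ ((hK.continuousAt.tendsto.mono_left nhdsWithin_le_nhds).congr' hHK.symm)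
  have hT : ∀ a, Tendsto H (𝓝[≠] a) (𝓝 (G a)) := by
    intro a
    obtain ⟨K, hK, hHK⟩ := hloc a
    rw [hlim a K hK hHK]
    exact (hK.continuousAt.tendsto.mono_left nhdsWithin_le_nhds).congr' hHK.symm
  have hdiff : Differentiable ℂ G := by
    intro a
    obtain ⟨K, hK, hHK⟩ := hloc a
    have : G =ᶠ[𝓝 a] K := by
      have h1 := eventually_eventually_nhdsWithin.mpr hHK
      rw [eventually_nhdsWithin_iff] at h1
      filter_upwards [h1, hK.eventually_analyticAt] with b hb hKb
      by_cases hba : b = a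
      · subst hba; exact hlim b K hK hHK
      · refine hlim b K hKb ?_
        have h2 : ∀ᶠ z in 𝓝 b, z ∈ ({a}ᶜ : Set ℂ) := isOpen_compl_singleton.mem_nhds hba
        have h3 := hb hba
        rw [eventually_nhdsWithin_iff] at h3
        refine Filter.Eventually.filter_mono nhdsWithin_le_nhds ?_
        filter_upwards [h3, h2] with z hz1 hz2
        exact hz1 hz2
    exact (hK.congr this.symm).differentiableAt
  have hGper : ∀ z w, w ∈ P.lattice → G (z + w) = G z := by
    intro z w hw
    refine (hG z _ ?_).symm
    have h1 : Tendsto (fun x ↦ x + w) (𝓝[≠] z) (𝓝[≠] (z + w)) := by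
      refine tendsto_nhdsWithin_iff.mpr ⟨?_, ?_⟩
      · exact ((continuous_add_const w).tendsto z).mono_left nhdsWithin_le_nhds
      · filter_upwards [self_mem_nhdsWithin] with x hx
        simpa using hx
    exact ((hT (z + w)).comp h1).congr' (hper w hw z)
  have hconst := hdiff.apply_eq_apply_of_bounded (IsZLattice.isCompact_range_of_periodic P.lattice _
    hdiff.continuous hGper).isBounded a 0
  rw [hG 0 0 h0, hG a (H a) (ha.tendsto.mono_left nhdsWithin_le_nhds)] at hconst
  exact hconst

lemma exists_factor_one {f : ℂ → ℂ} {a : ℂ} (hf : AnalyticAt ℂ f a) (h0 : f a = 0) :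
    ∃ g, AnalyticAt ℂ g a ∧ ∀ᶠ z in 𝓝 a, f z = (z - a) * g z := by
  have := (natCast_le_analyticOrderAt hf (n := 1)).mp
    ((natCast_le_analyticOrderAt_iff_iteratedDeriv_eq_zero hf).mpr (by
      intro i hi
      obtain rfl : i = 0 := by lia
      simpa using h0))
  simpa using this

lemma exists_factor_three {f : ℂ → ℂ} {a : ℂ} (hf : AnalyticAt ℂ f a) (h0 : f a = 0)
    (h1 : deriv f a = 0) (h2 : deriv (deriv f) a = 0) :
    ∃ g, AnalyticAt ℂ g a ∧ ∀ᶠ z in 𝓝 a, f z = (z - a) ^ 3 * g z := by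
  have := (natCast_le_analyticOrderAt hf (n := 3)).mp
    ((natCast_le_analyticOrderAt_iff_iteratedDeriv_eq_zero hf).mpr (by
      intro i hi
      obtain rfl | rfl | rfl : i = 0 ∨ i = 1 ∨ i = 2 := by lia
      · simpa using h0
      · simpa [iteratedDeriv_one] using h1
      · simpa [iteratedDeriv_succ, iteratedDeriv_zero] using h2))
  simpa using this

/-- The function which is to be shown to vanish. -/
def H (δ ξ : ℂ) : ℂ :=
  (Z P (ξ + δ) - Z P ξ - Z P δ) * (℘[P] ξ - ℘[P] δ) - 1 / 2 * (℘'[P] ξ - ℘'[P] δ)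

variable {P}

lemma hasDerivAt_wp {z : ℂ} (hz : z ∉ P.lattice) : HasDerivAt ℘[P] (℘'[P] z) z := by
  have := (P.analyticOnNhd_weierstrassP z hz).differentiableAt.hasDerivAt
  rwa [P.deriv_weierstrassP] at this

lemma analyticAt_shift {f : ℂ → ℂ} {a δ : ℂ} (hf : AnalyticAt ℂ f (a + δ)) :
    AnalyticAt ℂ (fun ξ ↦ f (ξ + δ)) a :=
  AnalyticAt.fun_comp (g := f) (f := fun ξ ↦ ξ + δ) hf (by fun_prop)

lemma analyticAt_H {δ a : ℂ} (ha : a ∉ P.lattice) (haδ : a + δ ∉ P.lattice) :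
    AnalyticAt ℂ (H P δ) a := by
  have h1 := analyticAt_shift (analyticAt_Z P haδ)
  have h2 := analyticAt_Z P ha
  have h3 := P.analyticOnNhd_weierstrassP a ha
  have h4 := P.analyticOnNhd_derivWeierstrassP a ha
  unfold H
  fun_prop

lemma eventually_notMem (a : ℂ) : ∀ᶠ z in 𝓝[≠] a, z ∉ P.lattice := by
  filter_upwards [self_mem_nhdsWithin, mem_nhdsWithin_of_mem_nhds
    (P.compl_lattice_sdiff_singleton_mem_nhds a)] with w hw hw'
  simp_all

lemma tendsto_shift (a δ : ℂ) : Tendsto (fun x ↦ x + δ) (𝓝[≠] a) (𝓝[≠] (a + δ)) := by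
  refine tendsto_nhdsWithin_iff.mpr ⟨?_, ?_⟩
  · exact ((continuous_add_const δ).tendsto a).mono_left nhdsWithin_le_nhds
  · filter_upwards [self_mem_nhdsWithin] with x hx
    simpa using hx

lemma H_add {δ z l : ℂ} (hl : l ∈ P.lattice) (hz : z ∉ P.lattice) (hzδ : z + δ ∉ P.lattice) :
    H P δ (z + l) = H P δ z := by
  obtain ⟨c, hc⟩ := Z_add_coe P ⟨l, hl⟩
  have h1 := hc z hz
  have h2 := hc (z + δ) hzδ
  have h3 := P.weierstrassP_add_coe z ⟨l, hl⟩
  have h4 := P.derivWeierstrassP_add_coe z ⟨l, hl⟩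
  simp only at h1 h2 h3 h4
  have e : z + l + δ = z + δ + l := by ring
  rw [H, H, e, h1, h2, h3, h4]
  ring

lemma H_per (δ : ℂ) : ∀ l ∈ P.lattice, ∀ a, ∀ᶠ z in 𝓝[≠] a, H P δ (z + l) = H P δ z := by
  intro l hl a
  filter_upwards [eventually_notMem (P := P) a,
    (tendsto_shift a δ).eventually (eventually_notMem (P := P) (a + δ))] with z hz hzδ
  exact H_add hl hz hzδ

lemma local_neg {δ : ℂ} (hδ : δ ∉ P.lattice) :
    ∃ K, AnalyticAt ℂ K (-δ) ∧ H P δ =ᶠ[𝓝[≠] (-δ)] K := by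
  have hnδ : -δ ∉ P.lattice := by simpa using hδ
  have h2 := analyticAt_Z P hnδ
  have h3 := P.analyticOnNhd_weierstrassP _ hnδ
  have h4 := P.analyticOnNhd_derivWeierstrassP _ hnδ
  have h5 : AnalyticAt ℂ (fun ξ ↦ h P (ξ + δ)) (-δ) :=
    analyticAt_shift (analyticAt_h P (by simp))
  obtain ⟨g, hg, hge⟩ := exists_factor_one (f := fun ξ ↦ ℘[P] ξ - ℘[P] δ) (a := -δ)
    (by fun_prop) (by simp)
  refine ⟨fun ξ ↦ (h P (ξ + δ) - Z P ξ - Z P δ) * (℘[P] ξ - ℘[P] δ) + g ξ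
    - 1 / 2 * (℘'[P] ξ - ℘'[P] δ), by fun_prop, ?_⟩
  filter_upwards [self_mem_nhdsWithin, mem_nhdsWithin_of_mem_nhds hge] with ξ hξ hξ'
  have hne : ξ + δ ≠ 0 := fun e ↦ hξ (by simpa using eq_neg_of_add_eq_zero_left e)
  rw [sub_neg_eq_add] at hξ'
  have : g ξ = 1 / (ξ + δ) * (℘[P] ξ - ℘[P] δ) := by rw [hξ']; field_simp
  rw [H, this, Z]
  ring

lemma local_zero {δ : ℂ} (hδ : δ ∉ P.lattice) :
    ∃ K, AnalyticAt ℂ K 0 ∧ H P δ =ᶠ[𝓝[≠] 0] K ∧ K 0 = 0 := by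
  have hδ' : 0 + δ ∉ P.lattice := by simpa using hδ
  have hA : AnalyticAt ℂ (fun ξ ↦ Z P (ξ + δ)) 0 := analyticAt_shift (analyticAt_Z P hδ')
  have hh : AnalyticAt ℂ (h P) 0 := analyticAt_h P (by simp)
  have hq := P.analyticAt_weierstrassPExcept 0
  have hq' := P.analyticAt_derivWeierstrassPExcept 0
  have hnear : ∀ᶠ ξ in 𝓝 (0 : ℂ), ξ ∈ ((P.lattice : Set ℂ) \ {0})ᶜ :=
    P.compl_lattice_sdiff_singleton_mem_nhds 0
  have hnearδ : ∀ᶠ ξ in 𝓝 (0 : ℂ), ξ + δ ∉ P.lattice :=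
    (continuous_add_const δ).continuousAt.eventually
      (P.isClosed_lattice.isOpen_compl.mem_nhds hδ')
  let f : ℂ → ℂ := fun ξ ↦ Z P (ξ + δ) - Z P δ - h P ξ + ℘[P] δ * ξ + ℘'[P] δ / 2 * ξ ^ 2
  let f' : ℂ → ℂ := fun ξ ↦ -℘[P] (ξ + δ) + ℘[P - (0 : ℂ)] ξ + ℘[P] δ + ℘'[P] δ * ξ
  have hf : AnalyticAt ℂ f 0 := by fun_prop
  have hdf : ∀ ξ, ξ + δ ∉ P.lattice → ξ ∈ ((P.lattice : Set ℂ) \ {0})ᶜ →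
      HasDerivAt f (f' ξ) ξ := by
    intro ξ h1 h2
    have := (((((hasDerivAt_Z P h1).comp_add_const ξ δ).sub_const (Z P δ)).sub
      (hasDerivAt_h P h2)).add ((hasDerivAt_id ξ).const_mul (℘[P] δ))).add
      ((hasDerivAt_pow 2 ξ).const_mul (℘'[P] δ / 2))
    have e : f' ξ = -℘[P] (ξ + δ) - -℘[P - (0 : ℂ)] ξ + ℘[P] δ * 1 +
      ℘'[P] δ / 2 * (((2 : ℕ) : ℂ) * ξ ^ (2 - 1)) := by
      simp only [f']; push_cast; ring
    rw [e]
    exact this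
  have hdfe : deriv f =ᶠ[𝓝 0] f' := by
    filter_upwards [hnear, hnearδ] with ξ h1 h2
    exact (hdf ξ h2 h1).deriv
  have hddf : HasDerivAt f' 0 0 := by
    have hqd : HasDerivAt ℘[P - (0 : ℂ)] 0 0 := by
      have := hq.differentiableAt.hasDerivAt
      rwa [P.deriv_weierstrassPExcept_same, P.derivWeierstrassPExcept_zero_zero] at this
    have := (((((hasDerivAt_wp hδ').comp_add_const 0 δ).neg).add hqd).add_const (℘[P] δ)).add
      ((hasDerivAt_id (0 : ℂ)).const_mul (℘'[P] δ))
    have e : (0 : ℂ) = -℘'[P] (0 + δ) + 0 + ℘'[P] δ * 1 := by simp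
    rw [← e] at this
    exact this
  obtain ⟨B, hB, hBe⟩ := exists_factor_three hf (by simp [f, h_zero])
    (by rw [hdfe.eq_of_nhds]; simp [f']) (by rw [hdfe.deriv_eq, hddf.deriv])
  obtain ⟨C, hC, hCe⟩ := exists_factor_one hq (by simp)
  -- `C` itself vanishes at the origin
  have hC0 : C 0 = 0 := by
    have h1 : HasDerivAt (fun z ↦ (z - 0) * C z) (1 * C 0 + (0 - 0) * deriv C 0) 0 :=
      ((hasDerivAt_id (0 : ℂ)).sub_const 0).mul hC.differentiableAt.hasDerivAt
    have h2 : deriv ℘[P - (0 : ℂ)] 0 = deriv (fun z ↦ (z - 0) * C z) 0 :=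
      EventuallyEq.deriv_eq hCe
    rw [h1.deriv, P.deriv_weierstrassPExcept_same, P.derivWeierstrassPExcept_zero_zero] at h2
    simpa using h2.symm
  refine ⟨fun ξ ↦ (Z P (ξ + δ) - Z P δ - h P ξ) * (℘[P - (0 : ℂ)] ξ - ℘[P] δ) + ξ * B ξ - C ξ
    - 1 / 2 * ℘'[P - (0 : ℂ)] ξ, by fun_prop, ?_, by simp [hC0, h_zero]⟩
  filter_upwards [self_mem_nhdsWithin, mem_nhdsWithin_of_mem_nhds hBe,
    mem_nhdsWithin_of_mem_nhds hCe] with ξ hξ hBξ hCξ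
  have hne : ξ ≠ 0 := hξ
  have e1 := P.weierstrassPExcept_add 0 ξ
  have e2 := P.derivWeierstrassPExcept_sub 0 ξ
  simp only [ZeroMemClass.coe_zero, sub_zero] at e1 e2 hBξ hCξ
  have hZ : Z P ξ = 1 / ξ + h P ξ := rfl
  simp only [f] at hBξ
  have hB' : B ξ = (Z P (ξ + δ) - Z P δ - h P ξ + ℘[P] δ * ξ + ℘'[P] δ / 2 * ξ ^ 2) / ξ ^ 3 := by
    rw [hBξ]; field_simp
  have hC' : C ξ = ℘[P - (0 : ℂ)] ξ / ξ := by rw [hCξ]; field_simp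
  rw [H, hB', hC', ← e1, ← e2, hZ]
  simp only [ne_eq, OfNat.ofNat_ne_zero, not_false_eq_true, zero_pow, div_zero, sub_zero]
  field_simp
  ring

lemma local_shift {δ a l : ℂ} (hl : l ∈ P.lattice)
    (hK : ∃ K, AnalyticAt ℂ K a ∧ H P δ =ᶠ[𝓝[≠] a] K) :
    ∃ K, AnalyticAt ℂ K (a + l) ∧ H P δ =ᶠ[𝓝[≠] (a + l)] K := by
  obtain ⟨K, hK, he⟩ := hK
  have ea : a + l + -l = a := by ring
  refine ⟨fun ξ ↦ K (ξ + -l), analyticAt_shift (by rwa [ea]), ?_⟩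
  have h1 := tendsto_shift (a + l) (-l)
  rw [ea] at h1
  filter_upwards [h1.eventually he, H_per (P := P) δ (-l) (neg_mem hl) (a + l)] with z hz1 hz2
  rw [← hz2, hz1]

lemma H_eq_zero {δ ξ : ℂ} (hδ : δ ∉ P.lattice) (hξ : ξ ∉ P.lattice) (hξδ : ξ + δ ∉ P.lattice) :
    H P δ ξ = 0 := by
  obtain ⟨K, hK, hHK, hK0⟩ := local_zero hδ
  refine liouville P (H P δ) ?_ (H_per δ) ?_ ξ (analyticAt_H hξ hξδ).continuousAt
  · intro a
    by_cases ha : a ∈ P.lattice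
    · simpa using local_shift (a := 0) ha ⟨K, hK, hHK⟩
    by_cases haδ : a + δ ∈ P.lattice
    · simpa using local_shift (a := -δ) haδ (local_neg hδ)
    exact ⟨H P δ, analyticAt_H ha haδ, EventuallyEq.rfl⟩
  · have := (hK.continuousAt.tendsto.mono_left nhdsWithin_le_nhds).congr' hHK.symm
    rwa [hK0] at this

end WZ

/-- The coefficient `η_δ(ξ) = ζ(ξ+δ) − ζ(ξ) − ζ(δ)` equals
`(1/2)·(℘′(ξ) − ℘′(δ))/(℘(ξ) − ℘(δ))`. -/
theorem eta_eq_wp_ratio (L : EllLattice) (ξ δ : ℂ)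
    (hξ : ¬ L.mem ξ) (hδ : ¬ L.mem δ) (hξδ : ¬ L.mem (ξ + δ))
    (hne : L.wp ξ ≠ L.wp δ) :
    L.zeta (ξ + δ) - L.zeta ξ - L.zeta δ =
      (1 / 2) * (deriv L.wp ξ - deriv L.wp δ) / (L.wp ξ - L.wp δ) := by
  rw [WZ.mem_iff] at hξ hδ hξδ
  have hH := WZ.H_eq_zero hδ hξ hξδ
  have hne' : L.wp ξ - L.wp δ ≠ 0 := sub_ne_zero.mpr hne
  rw [eq_div_iff hne', WZ.zeta_eq L hξ, WZ.zeta_eq L hδ, WZ.zeta_eq L hξδ, WZ.wp_eq L hξ,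
    WZ.wp_eq L hδ, WZ.deriv_wp_eq L hξ, WZ.deriv_wp_eq L hδ]
  rw [WZ.H] at hH
  linear_combination hH
end
end

section
/- For all ξ, δ, κ, λ ∈ ℂ such that ξ, δ, κ, λ, ξ+δ, κ−λ, λ−κ, ξ+κ, δ+λ, ξ+δ+κ, ξ+δ+λ, ξ+κ−λ, δ+λ−κ ∉ Λ, the Lamé function satisfies the addition formula Ψ_ξ(κ)·Ψ_δ(λ) = e^{η_δ(ξ)·κ}·Ψ_{ξ+δ}(κ)·Ψ_δ(λ−κ) + e^{η_δ(ξ)·λ}·Ψ_ξ(κ−λ)·Ψ_{ξ+δ}(λ). -/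
open scoped BigOperators

noncomputable section

open Filter Topology

namespace SigAux

/-- Weierstrass elementary factor. -/
def E (w z : ℂ) : ℂ := (1 - z / w) * Complex.exp (z / w + z ^ 2 / (2 * w ^ 2))

/-- Log derivative of the elementary factor. -/
def g (w z : ℂ) : ℂ := z ^ 2 / (w ^ 2 * (z - w))

/-- sigma of a period pair. -/
def S (P : PeriodPair) (z : ℂ) : ℂ := z * ∏' l : P.lattice, E l z

lemma E_zero (z : ℂ) : E 0 z = 1 := by simp [E]

lemma factor_bound (t : ℂ) (ht : ‖t‖ ≤ 1 / 2) :
    ‖(1 - t) * Complex.exp (t + t ^ 2 / 2) - 1‖ ≤ 6 * ‖t‖ ^ 3 := by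
  set s := t + t ^ 2 / 2 with hs
  have ht0 := norm_nonneg t
  have hsn : ‖s‖ ≤ 5 / 4 * ‖t‖ := by
    calc ‖s‖ ≤ ‖t‖ + ‖t ^ 2 / 2‖ := norm_add_le _ _
      _ = ‖t‖ + ‖t‖ ^ 2 / 2 := by simp
      _ ≤ _ := by nlinarith
  have hs1 : ‖s‖ ≤ 1 := by linarith
  have hb := Complex.exp_bound hs1 (n := 3) (by norm_num)
  simp only [Finset.sum_range_succ, Finset.sum_range_zero] at hb
  norm_num [Nat.factorial] at hb
  set R := Complex.exp s - (1 + s + s ^ 2 / 2) with hR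
  have hb2 : ‖R‖ ≤ (5 / 4 * ‖t‖) ^ 3 := by
    refine hb.trans ?_
    calc ‖s‖ ^ 3 * (2 / 9) ≤ ‖s‖ ^ 3 * 1 := by gcongr; norm_num
      _ = ‖s‖ ^ 3 := mul_one _
      _ ≤ _ := by gcongr
  have e : (1 - t) * Complex.exp s - 1 =
      (1 - t) * R - t ^ 3 * (1 / 2 + 3 * t / 8 + t ^ 2 / 8) := by
    rw [hR, hs]; ring
  have n1 : ‖1 - t‖ ≤ 3 / 2 := by
    calc ‖1 - t‖ ≤ ‖(1 : ℂ)‖ + ‖t‖ := norm_sub_le _ _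
      _ ≤ _ := by simp; linarith
  have n2 : ‖(1 / 2 + 3 * t / 8 + t ^ 2 / 8 : ℂ)‖ ≤ 1 := by
    calc ‖(1 / 2 + 3 * t / 8 + t ^ 2 / 8 : ℂ)‖
        ≤ ‖(1 / 2 : ℂ)‖ + ‖3 * t / 8‖ + ‖t ^ 2 / 8‖ := norm_add₃_le
      _ = 1 / 2 + 3 * ‖t‖ / 8 + ‖t‖ ^ 2 / 8 := by simp
      _ ≤ 1 := by nlinarith
  rw [e]
  calc ‖(1 - t) * R - t ^ 3 * (1 / 2 + 3 * t / 8 + t ^ 2 / 8)‖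
      ≤ ‖(1 - t) * R‖ + ‖t ^ 3 * (1 / 2 + 3 * t / 8 + t ^ 2 / 8)‖ := norm_sub_le _ _
    _ = ‖1 - t‖ * ‖R‖ + ‖t‖ ^ 3 * ‖(1 / 2 + 3 * t / 8 + t ^ 2 / 8 : ℂ)‖ := by
        rw [norm_mul, norm_mul, norm_pow]
    _ ≤ 3 / 2 * (5 / 4 * ‖t‖) ^ 3 + ‖t‖ ^ 3 * 1 := by gcongr
    _ ≤ _ := by nlinarith [pow_nonneg ht0 3]

lemma E_bound (r : ℝ) (z w : ℂ) (hz : ‖z‖ ≤ r) (hr : 0 < r) (hw : 2 * r ≤ ‖w‖) :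
    ‖E w z - 1‖ ≤ 6 * r ^ 3 * ‖w‖⁻¹ ^ 3 := by
  have hw0 : 0 < ‖w‖ := by linarith
  have ht : ‖z / w‖ ≤ r * ‖w‖⁻¹ := by
    rw [norm_div, div_eq_mul_inv]; gcongr
  have h2 : r * ‖w‖⁻¹ ≤ 1 / 2 := by
    rw [← div_eq_mul_inv, div_le_iff₀ hw0]; linarith
  have := factor_bound (z / w) (ht.trans h2)
  have e : E w z = (1 - z / w) * Complex.exp (z / w + (z / w) ^ 2 / 2) := by
    rw [E]; congr 3; rw [div_pow, div_div, mul_comm]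
  rw [e]
  refine this.trans ?_
  calc 6 * ‖z / w‖ ^ 3 ≤ 6 * (r * ‖w‖⁻¹) ^ 3 := by gcongr
    _ = _ := by ring

lemma g_bound (r : ℝ) (z w : ℂ) (hz : ‖z‖ ≤ r) (hr : 0 < r) (hw : 2 * r ≤ ‖w‖) :
    ‖g w z‖ ≤ 2 * r ^ 2 * ‖w‖⁻¹ ^ 3 := by
  have hw0 : 0 < ‖w‖ := by linarith
  have h1 : ‖w‖ / 2 ≤ ‖z - w‖ := by
    have := norm_sub_norm_le w z
    rw [norm_sub_rev] at this
    linarith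
  rw [g, norm_div, norm_mul, norm_pow, norm_pow]
  calc ‖z‖ ^ 2 / (‖w‖ ^ 2 * ‖z - w‖) ≤ r ^ 2 / (‖w‖ ^ 2 * (‖w‖ / 2)) := by gcongr
    _ = _ := by field_simp

variable (P : PeriodPair)

lemma summable3 (C : ℝ) : Summable fun l : P.lattice ↦ C * ‖(l : ℂ)‖⁻¹ ^ 3 :=
  (ZLattice.summable_norm_pow_inv P.lattice 3 (by simp)).mul_left C

lemma ev_large (R : ℝ) : ∀ᶠ l : P.lattice in cofinite, R ≤ ‖(l : ℂ)‖ := by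
  refine (isCompact_iff_finite.mp (isCompact_closedBall (0 : P.lattice) R)).subset ?_
  intro l hl
  have : ‖(l : ℂ)‖ < R := by simpa using hl
  simpa using this.le

lemma E_diff (w : ℂ) : Differentiable ℂ (E w) := by
  unfold E
  intro z
  fun_prop

lemma E_ne_zero {w z : ℂ} (h : w ≠ 0 → z ≠ w) : E w z ≠ 0 := by
  by_cases hw : w = 0
  · simp [hw, E_zero]
  · rw [E]
    refine mul_ne_zero ?_ (Complex.exp_ne_zero _)
    intro h0
    have : z / w = 1 := (sub_eq_zero.mp h0).symm
    exact h hw ((div_eq_one_iff_eq hw).mp this)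

lemma E_self {w : ℂ} (h : w ≠ 0) : E w w = 0 := by
  simp [E, h]

lemma mult_ball (r : ℝ) (hr : 0 < r) :
    MultipliableLocallyUniformlyOn (fun (l : P.lattice) z ↦ E l z) (Metric.ball 0 r) := by
  have := Summable.multipliableLocallyUniformlyOn_one_add (K := Metric.ball (0 : ℂ) r)
    (f := fun (l : P.lattice) z ↦ E l z - 1) Metric.isOpen_ball (summable3 P (6 * r ^ 3))
    (by
      filter_upwards [ev_large P (2 * r)] with l hl z hz
      exact E_bound r z l (by simpa using (Metric.mem_ball.mp hz).le) hr hl)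
    (fun l ↦ ((E_diff l).sub_const 1).continuous.continuousOn)
  simpa using this

lemma tprod_diff : Differentiable ℂ (fun z ↦ ∏' l : P.lattice, E l z) := by
  intro z
  have hr : 0 < ‖z‖ + 1 := by positivity
  have h := (mult_ball P _ hr).hasProdLocallyUniformlyOn.differentiableOn
    (.of_forall fun s ↦ by
      exact DifferentiableOn.fun_finsetProd fun i _ ↦ (E_diff _).differentiableOn) Metric.isOpen_ball
  exact h.differentiableAt (Metric.isOpen_ball.mem_nhds (by simp))

lemma S_diff : Differentiable ℂ (S P) := by
  have := tprod_diff P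
  unfold S
  fun_prop

lemma tprod_ne_zero {z : ℂ} (hz : ∀ l : P.lattice, (l : ℂ) ≠ 0 → z ≠ l) :
    ∏' l : P.lattice, E l z ≠ 0 := by
  have hr : 0 < ‖z‖ + 1 := by positivity
  have := tprod_one_add_ne_zero_of_summable (f := fun l : P.lattice ↦ E l z - 1)
    (fun l ↦ by simpa using E_ne_zero (hz l))
    (by
      refine Summable.of_norm_bounded_eventually (summable3 P (6 * (‖z‖ + 1) ^ 3)) ?_
      filter_upwards [ev_large P (2 * (‖z‖ + 1))] with l hl
      simpa using E_bound _ z l (by linarith) hr hl)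
  simpa using this

lemma S_ne_zero {z : ℂ} (hz : z ∉ P.lattice) : S P z ≠ 0 := by
  refine mul_ne_zero (fun h ↦ hz (h ▸ zero_mem _)) (tprod_ne_zero P ?_)
  rintro l _ rfl
  exact hz l.2

lemma S_eq_zero {z : ℂ} (hz : z ∈ P.lattice) : S P z = 0 := by
  by_cases h : z = 0
  · simp [S, h]
  · rw [S, tprod_of_exists_eq_zero ⟨(⟨z, hz⟩ : P.lattice), E_self h⟩, mul_zero]

lemma S_deriv_zero : deriv (S P) 0 ≠ 0 := by
  have h : HasDerivAt (S P) (1 * (∏' l : P.lattice, E l 0) +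
      0 * deriv (fun z ↦ ∏' l : P.lattice, E l z) 0) 0 :=
    (hasDerivAt_id (0 : ℂ)).mul (tprod_diff P 0).hasDerivAt
  rw [h.deriv]
  simp only [E]
  simp

lemma S_neg (z : ℂ) : S P (-z) = - S P z := by
  rw [S, S, ← (Equiv.neg P.lattice).tprod_eq, neg_mul]
  congr 2
  congr with l
  simp [E, neg_div_neg_eq]

lemma E_logDeriv {w z : ℂ} (hw : w ≠ 0 → z ≠ w) : logDeriv (E w) z = g w z := by
  by_cases h0 : w = 0
  · have : E w = fun _ ↦ 1 := by ext z; simp [h0, E_zero]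
    rw [this]; simp [g, h0]
  have hzw := sub_ne_zero.mpr (hw h0)
  have h1 : HasDerivAt (fun z : ℂ ↦ 1 - z / w) (-(1 / w)) z := by
    simpa using ((hasDerivAt_id z).div_const w).const_sub 1
  have h2 : HasDerivAt (fun z : ℂ ↦ z / w + z ^ 2 / (2 * w ^ 2)) (1 / w + z / w ^ 2) z := by
    refine (((hasDerivAt_id z).div_const w).add
      (((hasDerivAt_pow 2 z).div_const (2 * w ^ 2)))).congr_deriv ?_
    field_simp
    simp
    ring
  have h3 : HasDerivAt (E w) _ z := h1.mul h2.cexp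
  have hne : (1 - z / w) ≠ 0 := by
    rw [sub_ne_zero]; intro h; exact hw h0 ((div_eq_one_iff_eq h0).mp h.symm)
  have hwz : w - z ≠ 0 := by rw [← neg_sub]; exact neg_ne_zero.mpr hzw
  rw [logDeriv_apply, h3.deriv, E, g]
  have he := Complex.exp_ne_zero (z / w + z ^ 2 / (2 * w ^ 2))
  rw [div_eq_div_iff (mul_ne_zero hne he) (mul_ne_zero (pow_ne_zero 2 h0) hzw)]
  generalize Complex.exp (z / w + z ^ 2 / (2 * w ^ 2)) = e
  field_simp
  ring

/-- sum of the log derivatives -/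
def Z (z : ℂ) : ℂ := ∑' l : P.lattice, g l z

lemma Z_tendsto : TendstoLocallyUniformlyOn (fun (t : Finset P.lattice) z ↦ ∑ l ∈ t, g l z)
    (Z P) atTop (P.latticeᶜ : Set ℂ) := by
  rw [tendstoLocallyUniformlyOn_iff_forall_isCompact P.isClosed_lattice.isOpen_compl]
  intro K _ hK
  obtain ⟨r, hr, hKr⟩ := hK.isBounded.exists_pos_norm_le
  refine tendstoUniformlyOn_tsum_of_cofinite_eventually (summable3 P (2 * r ^ 2)) ?_
  filter_upwards [ev_large P (2 * r)] with l hl z hz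
  exact g_bound r z l (hKr z hz) hr hl

lemma g_summable (z : ℂ) : Summable fun l : P.lattice ↦ g l z := by
  have hr : 0 < ‖z‖ + 1 := by positivity
  refine Summable.of_norm_bounded_eventually (summable3 P (2 * (‖z‖ + 1) ^ 2)) ?_
  filter_upwards [ev_large P (2 * (‖z‖ + 1))] with l hl
  exact g_bound _ z l (by linarith) hr hl

lemma g_hasDeriv {w z : ℂ} (hz : z ≠ w) :
    HasDerivAt (g w) (-(if w = 0 then 0 else (1 / (z - w) ^ 2 - 1 / w ^ 2))) z := by
  split_ifs with h
  · have : g w = fun _ ↦ 0 := by ext z; simp [g, h]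
    rw [this]
    simpa using hasDerivAt_const z (0 : ℂ)
  · have hzw := sub_ne_zero.mpr hz
    have h1 : HasDerivAt (fun z : ℂ ↦ w ^ 2 * (z - w)) (w ^ 2) z := by
      simpa using ((hasDerivAt_id z).sub_const w).const_mul (w ^ 2)
    refine ((hasDerivAt_pow 2 z).div h1 (by positivity)).congr_deriv ?_
    field_simp
    ring

lemma Z_hasDeriv {z : ℂ} (hz : z ∉ P.lattice) :
    HasDerivAt (Z P) (- P.weierstrassPExcept 0 z) z := by
  have ho : IsOpen (P.latticeᶜ : Set ℂ) := P.isClosed_lattice.isOpen_compl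
  have hne : ∀ {z : ℂ}, z ∈ (P.latticeᶜ : Set ℂ) → ∀ l : P.lattice, z ≠ l := by
    rintro z hz l rfl; exact hz l.2
  refine hasDerivAt_of_tendstoLocallyUniformlyOn ho
    (f := fun (t : Finset P.lattice) z ↦ ∑ l ∈ t, g l z) (l := atTop)
    (f' := fun t z ↦ ∑ l ∈ t, -(if (l : ℂ) = 0 then 0 else (1 / (z - l) ^ 2 - 1 / (l : ℂ) ^ 2)))
    (g' := fun z ↦ - P.weierstrassPExcept 0 z) ?_ ?_ (fun x hx ↦ (Z_tendsto P).tendsto_at hx) hz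
  · have := (P.hasSumLocallyUniformly_weierstrassPExcept 0).tendstoLocallyUniformlyOn (s := (P.latticeᶜ : Set ℂ))
    have := this.neg
    simp only [Finset.sum_neg_distrib]
    exact this
  · refine .of_forall fun t x hx ↦ HasDerivAt.fun_sum fun l _ ↦ g_hasDeriv (hne hx l)

lemma S_logDeriv {z : ℂ} (hz : z ∉ P.lattice) : logDeriv (S P) z = 1 / z + Z P z := by
  have hne : ∀ l : P.lattice, z ≠ l := by
    rintro l rfl; exact hz l.2
  have h0 : z ≠ 0 := fun h ↦ hz (h ▸ zero_mem _)
  have hp := tprod_ne_zero P (fun l _ ↦ hne l)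
  have : S P = fun z ↦ z * ∏' l : P.lattice, E l z := rfl
  rw [this, logDeriv_mul (f := fun z ↦ z) z h0 hp differentiableAt_id (tprod_diff P z)]
  have hr : 0 < ‖z‖ + 1 := by positivity
  have e : ∀ l : P.lattice, logDeriv (E l) z = g l z := fun l ↦ E_logDeriv fun _ ↦ hne l
  rw [logDeriv_tprod_eq_tsum (s := Metric.ball 0 (‖z‖ + 1)) Metric.isOpen_ball (by simp)
    (fun l ↦ E_ne_zero fun _ ↦ hne l) (fun l ↦ (E_diff l).differentiableOn)
    (by simpa only [e] using g_summable P z) (mult_ball P _ hr) hp]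
  simp only [e, Z]
  congr 1
  simp [logDeriv_apply]

lemma S_zeta_hasDeriv {z : ℂ} (hz : z ∉ P.lattice) :
    HasDerivAt (fun z ↦ 1 / z + Z P z) (- P.weierstrassP z) z := by
  have h0 : z ≠ 0 := fun h ↦ hz (h ▸ zero_mem _)
  have h := P.weierstrassPExcept_add 0 z
  have h1 : HasDerivAt (fun z : ℂ ↦ 1 / z) (-(1 / z ^ 2)) z := by
    simpa using hasDerivAt_inv h0
  refine (h1.add (Z_hasDeriv P hz)).congr_deriv ?_
  rw [← h]
  simp

/-- quasi-periodicity -/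
lemma S_quasi (w : ℂ) (hw : w ∈ P.lattice) :
    ∃ η C : ℂ, C ≠ 0 ∧ ∀ z, S P (z + w) = C * Complex.exp (η * z) * S P z := by
  have ho : IsOpen (P.latticeᶜ : Set ℂ) := P.isClosed_lattice.isOpen_compl
  have hcount : (P.lattice : Set ℂ).Countable := by
    have : Countable P.lattice := P.latticeEquivProd.toEquiv.countable_iff.mpr inferInstance
    exact Set.to_countable _
  have hconn : IsPreconnected (P.latticeᶜ : Set ℂ) :=
    (hcount.isConnected_compl_of_one_lt_rank (by simp)).isPreconnected
  have hadd : ∀ {z : ℂ}, z ∉ P.lattice → z + w ∉ P.lattice := by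
    intro z hz h; exact hz (by simpa using sub_mem h hw)
  obtain ⟨z₀, hz₀⟩ : ∃ z₀, z₀ ∉ P.lattice := ⟨_, P.ω₁_div_two_notMem_lattice⟩
  -- first integration
  set ζ : ℂ → ℂ := fun z ↦ 1 / z + Z P z with hζ
  have d1 : ∀ z ∉ P.lattice, HasDerivAt (fun z ↦ ζ (z + w) - ζ z) 0 z := by
    intro z hz
    have a := (S_zeta_hasDeriv P (hadd hz)).comp_add_const z w
    have b := S_zeta_hasDeriv P hz
    refine (a.sub b).congr_deriv ?_
    have := P.weierstrassP_add_coe z ⟨w, hw⟩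
    simp only at this
    rw [this]; ring
  obtain ⟨η, hη⟩ : ∃ η, ∀ z ∉ P.lattice, ζ (z + w) - ζ z = η := by
    refine ⟨ζ (z₀ + w) - ζ z₀, fun z hz ↦ ?_⟩
    exact ho.is_const_of_deriv_eq_zero hconn
      (fun x hx ↦ (d1 x hx).differentiableAt.differentiableWithinAt)
      (fun x hx ↦ (d1 x hx).deriv) hz hz₀
  have dS : ∀ z ∉ P.lattice, HasDerivAt (S P) (ζ z * S P z) z := by
    intro z hz
    have := S_logDeriv P hz
    rw [logDeriv_apply, div_eq_iff (S_ne_zero P hz)] at this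
    rw [hζ]; simp only
    rw [← this]
    exact (S_diff P z).hasDerivAt
  have d2 : ∀ z ∉ P.lattice,
      HasDerivAt (fun z ↦ S P (z + w) * Complex.exp (-(η * z)) / S P z) 0 z := by
    intro z hz
    have a := (dS _ (hadd hz)).comp_add_const z w
    have b : HasDerivAt (fun z ↦ Complex.exp (-(η * z))) (Complex.exp (-(η * z)) * -(η * 1)) z :=
      ((hasDerivAt_id z).const_mul η).neg.cexp
    refine ((a.mul b).div (dS z hz) (S_ne_zero P hz)).congr_deriv ?_
    rw [div_eq_zero_iff]; left
    rw [← hη z hz]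
    simp only [Pi.mul_apply]
    ring
  refine ⟨η, S P (z₀ + w) * Complex.exp (-(η * z₀)) / S P z₀, ?_, ?_⟩
  · exact div_ne_zero (mul_ne_zero (S_ne_zero P (hadd hz₀)) (Complex.exp_ne_zero _))
      (S_ne_zero P hz₀)
  intro z
  by_cases hz : z ∈ P.lattice
  · rw [S_eq_zero P hz, S_eq_zero P (add_mem hz hw), mul_zero]
  have : S P (z + w) * Complex.exp (-(η * z)) / S P z =
      S P (z₀ + w) * Complex.exp (-(η * z₀)) / S P z₀ :=
    ho.is_const_of_deriv_eq_zero hconn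
      (fun x hx ↦ (d2 x hx).differentiableAt.differentiableWithinAt)
      (fun x hx ↦ (d2 x hx).deriv) hz hz₀
  rw [← this, Complex.exp_neg]
  have h1 := S_ne_zero P hz
  have h2 := Complex.exp_ne_zero (η * z)
  field_simp

lemma S_deriv_ne {p : ℂ} (hp : p ∈ P.lattice) : deriv (S P) p ≠ 0 := by
  obtain ⟨η, C, hC, h⟩ := S_quasi P p hp
  have a : HasDerivAt (fun z ↦ S P (z + p)) (deriv (S P) (0 + p)) 0 :=
    HasDerivAt.comp_add_const 0 p (S_diff P (0 + p)).hasDerivAt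
  have b0 : HasDerivAt (fun z ↦ C * Complex.exp (η * z)) _ 0 :=
    (((hasDerivAt_id (0 : ℂ)).const_mul η).cexp).const_mul C
  have b := b0.mul (S_diff P 0).hasDerivAt
  have e : (fun z ↦ S P (z + p)) = (fun z ↦ C * Complex.exp (η * z)) * S P := by
    ext z; simp [h z]
  rw [e] at a
  have := a.unique b
  rw [zero_add] at this
  rw [this, S_eq_zero P (zero_mem _)]
  simp [hC, S_deriv_zero P]

lemma liouville (F D : ℂ → ℂ) (hF : Differentiable ℂ F) (hD : Differentiable ℂ D)
    (hz : ∀ p, D p ≠ 0 ∨ (F p = 0 ∧ D p = 0 ∧ deriv D p ≠ 0))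
    (hq : ∀ w ∈ P.lattice, ∃ m : ℂ → ℂ, ∀ z, F (z + w) = m z * F z ∧ D (z + w) = m z * D z)
    (c : ℂ) (hc : F c = 0) (hDc : D c ≠ 0) : ∀ z, F z = 0 := by
  -- local bound
  have hO : ∀ p, F =O[𝓝 p] D := by
    intro p
    rcases hz p with h | ⟨h1, h2, h3⟩
    · refine Asymptotics.isBigO_of_div_tendsto_nhds
        (((hD p).continuousAt.eventually_ne h).mono fun z h1 h2 ↦ absurd h2 h1) (F p / D p) ?_
      exact (hF p).continuousAt.div (hD p).continuousAt h
    · have a := (hF p).hasDerivAt.isBigO_sub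
      have b := ((HasDerivAtFilter.isTheta_sub (hD p).hasDerivAt h3).isBigO_symm).comp_tendsto
        (k := fun z ↦ (z, p)) (l' := 𝓝 p) (tendsto_id.prodMk (tendsto_const_pure))
      have b' : (fun z ↦ z - p) =O[𝓝 p] fun z ↦ D z - D p := b
      simpa [h1, h2] using a.trans b'
  have hev : ∀ p, ∀ᶠ z in 𝓝[≠] p, D z ≠ 0 := by
    intro p
    rcases hz p with h | ⟨h1, h2, h3⟩
    · exact ((hD p).continuousAt.eventually_ne h).filter_mono nhdsWithin_le_nhds
    · exact (hD p).hasDerivAt.eventually_ne h3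
  -- bound on compacts
  have hK : ∀ K : Set ℂ, IsCompact K → ∃ M : ℝ, ∀ z ∈ K, ‖F z‖ ≤ M * ‖D z‖ := by
    intro K hK
    refine hK.induction_on (p := fun s ↦ ∃ M : ℝ, ∀ z ∈ s, ‖F z‖ ≤ M * ‖D z‖) ⟨0, by simp⟩
      (fun s t hst ⟨M, hM⟩ ↦ ⟨M, fun z hz ↦ hM z (hst hz)⟩) ?_ ?_
    · rintro s t ⟨M, hM⟩ ⟨N, hN⟩
      refine ⟨max M N, ?_⟩
      rintro z (hz | hz)
      · exact (hM z hz).trans (by gcongr; exact le_max_left _ _)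
      · exact (hN z hz).trans (by gcongr; exact le_max_right _ _)
    · intro p _
      obtain ⟨M, hM⟩ := (hO p).bound
      exact ⟨_, nhdsWithin_le_nhds hM, M, fun z hz ↦ hz⟩
  obtain ⟨M, hM⟩ : ∃ M : ℝ, ∀ z, ‖F z‖ ≤ M * ‖D z‖ := by
    obtain ⟨M, hM⟩ := hK (Metric.closedBall 0 (∑ i, ‖P.basis i‖)) (isCompact_closedBall _ _)
    refine ⟨M, fun z ↦ ?_⟩
    have h1 := ZSpan.norm_fract_le (K := ℝ) P.basis z
    have h2 : ((ZSpan.floor P.basis z : Submodule.span ℤ (Set.range P.basis)) : ℂ) ∈ P.lattice := by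
      rw [P.lattice_eq_span_range_basis]; exact (ZSpan.floor P.basis z).2
    obtain ⟨m, hm⟩ := hq _ h2
    have e : z = ZSpan.fract P.basis z + ZSpan.floor P.basis z := by
      rw [ZSpan.fract_apply]; ring
    have := hM (ZSpan.fract P.basis z) (by simpa using h1)
    obtain ⟨m1, m2⟩ := hm (ZSpan.fract P.basis z)
    rw [← e] at m1 m2
    rw [m1, m2, norm_mul, norm_mul]
    nlinarith [norm_nonneg (m (ZSpan.fract P.basis z))]
  have hM0 : ∀ z, ‖F z / D z‖ ≤ |M| := by
    intro z
    rw [norm_div]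
    refine div_le_of_le_mul₀ (norm_nonneg _) (abs_nonneg _) ((hM z).trans ?_)
    gcongr
    exact le_abs_self M
  set q : ℂ → ℂ := fun z ↦ F z / D z with hqdef
  have hqd : ∀ z, D z ≠ 0 → DifferentiableAt ℂ q z := fun z h ↦ (hF z).div (hD z) h
  have hlim : ∀ p, Tendsto q (𝓝[≠] p) (𝓝 (limUnder (𝓝[≠] p) q)) := by
    intro p
    refine Complex.tendsto_limUnder_of_differentiable_on_punctured_nhds_of_bounded_under
      ((hev p).mono fun z h ↦ hqd z h) ?_
    refine isBoundedUnder_of ⟨|M| + |M|, fun z ↦ (norm_sub_le _ _).trans ?_⟩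
    exact add_le_add (hM0 z) (hM0 p)
  set H : ℂ → ℂ := fun p ↦ limUnder (𝓝[≠] p) q with hH
  have hHq : ∀ p, D p ≠ 0 → H p = q p := fun p h ↦
    tendsto_nhds_unique (hlim p) ((hqd p h).continuousAt.tendsto.mono_left nhdsWithin_le_nhds)
  have hHd : Differentiable ℂ H := by
    intro p
    have hs : {z | z ≠ p → D z ≠ 0} ∈ 𝓝 p := eventually_nhdsWithin_iff.mp (hev p)
    have := Complex.differentiableOn_update_limUnder_of_bddAbove (f := q) hs
      (fun z hz ↦ (hqd z (hz.1 hz.2)).differentiableWithinAt)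
      ⟨|M|, by rintro _ ⟨z, _, rfl⟩; exact hM0 z⟩
    refine (this.differentiableAt hs).congr_of_eventuallyEq ?_
    filter_upwards [hs] with z hz
    by_cases h : z = p
    · subst h; simp [hH]
    · rw [Function.update_of_ne h, hHq z (hz h)]
  have hHb : Bornology.IsBounded (Set.range H) := by
    rw [isBounded_iff_forall_norm_le]
    refine ⟨|M|, ?_⟩
    rintro _ ⟨p, rfl⟩
    exact le_of_tendsto (hlim p).norm (.of_forall hM0)
  intro z
  by_cases h : D z = 0
  · rcases hz z with h' | h'
    · exact absurd h h'
    · exact h'.1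
  have := hHd.apply_eq_apply_of_bounded hHb z c
  rw [hHq z h, hHq c hDc, hqdef] at this
  simp only [hc, zero_div, div_eq_zero_iff, h, or_false] at this
  exact this

lemma three_term_generic (x d k l : ℂ) (hd : d ∉ P.lattice) (hk : k ∉ P.lattice)
    (hdk : d + k ∉ P.lattice) :
    S P (x + k) * S P (x + d) * (S P (d + l) * S P (l - k))
      - S P x * S P (x + (d + k)) * (S P (d + l - k) * S P l)
      + S P (x + (k - l)) * S P (x + (d + l)) * (S P k * S P d) = 0 := by
  have hS := S_diff P
  set F : ℂ → ℂ := fun x ↦ S P (x + k) * S P (x + d) * (S P (d + l) * S P (l - k))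
      - S P x * S P (x + (d + k)) * (S P (d + l - k) * S P l)
      + S P (x + (k - l)) * S P (x + (d + l)) * (S P k * S P d) with hF
  have hq : ∀ w ∈ P.lattice, ∃ m : ℂ → ℂ, ∀ z, F (z + w) = m z * F z ∧
      (S P (z + w) * S P (z + w + (d + k))) = m z * (S P z * S P (z + (d + k))) := by
    intro w hw
    obtain ⟨η, C, hC, h⟩ := S_quasi P w hw
    refine ⟨fun z ↦ C ^ 2 * Complex.exp (η * z + η * z + η * (d + k)), fun z ↦ ?_⟩
    have sh : ∀ a, S P (z + w + a) = C * Complex.exp (η * (z + a)) * S P (z + a) := by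
      intro a; rw [← h]; congr 1; ring
    have e1 : ∀ a b, a + b = d + k → Complex.exp (η * (z + a)) * Complex.exp (η * (z + b)) =
        Complex.exp (η * z + η * z + η * (d + k)) := by
      intro a b hab; rw [← Complex.exp_add, ← hab]; congr 1; ring
    have a1 := e1 k d (by ring)
    have a2 : Complex.exp (η * z) * Complex.exp (η * (z + (d + k))) =
        Complex.exp (η * z + η * z + η * (d + k)) := by simpa using e1 0 (d + k) (by ring)
    have a3 := e1 (k - l) (d + l) (by ring)
    constructor
    · simp only [hF, sh, h z]
      linear_combination (C ^ 2 * S P (z + k) * S P (z + d) * (S P (d + l) * S P (l - k))) * a1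
        - (C ^ 2 * S P z * S P (z + (d + k)) * (S P (d + l - k) * S P l)) * a2
        + (C ^ 2 * S P (z + (k - l)) * S P (z + (d + l)) * (S P k * S P d)) * a3
    · simp only [sh, h z]
      linear_combination (C ^ 2 * S P z * S P (z + (d + k))) * a2
  have F0 : F 0 = 0 := by
    simp only [hF, zero_add, S_eq_zero P (zero_mem _)]
    rw [← neg_sub l k, S_neg]; ring
  have F1 : F (-(d + k)) = 0 := by
    simp only [hF]
    have z1 : -(d + k) + k = - d := by ring
    have z2 : -(d + k) + d = - k := by ring
    have z3 : -(d + k) + (d + k) = 0 := by ring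
    have z4 : -(d + k) + (k - l) = - (d + l) := by ring
    have z5 : -(d + k) + (d + l) = l - k := by ring
    rw [z1, z2, z3, z4, z5]
    simp only [S_neg, S_eq_zero P (zero_mem _)]
    ring
  have F2 : F (-d) = 0 := by
    simp only [hF]
    have z2 : -d + d = 0 := by ring
    have z3 : -d + (d + k) = k := by ring
    have z4 : -d + (k - l) = - (d + l - k) := by ring
    have z5 : -d + (d + l) = l := by ring
    rw [z2, z3, z4, z5]
    simp only [S_neg, S_eq_zero P (zero_mem _)]
    ring
  refine liouville P F (fun z ↦ S P z * S P (z + (d + k))) ?_ ?_ ?_ hq (-d) F2 ?_ x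
  · simp only [hF]; fun_prop
  · fun_prop
  · intro p
    have hder : HasDerivAt (fun z ↦ S P z * S P (z + (d + k)))
        (deriv (S P) p * S P (p + (d + k)) + S P p * deriv (S P) (p + (d + k))) p :=
      (hS p).hasDerivAt.mul (HasDerivAt.comp_add_const p (d + k) (hS _).hasDerivAt)
    by_cases hp : p ∈ P.lattice
    · right
      have hp2 : p + (d + k) ∉ P.lattice := fun h ↦ hdk (by simpa using sub_mem h hp)
      refine ⟨?_, by simp [S_eq_zero P hp], ?_⟩
      · obtain ⟨m, hm⟩ := hq p hp
        have := (hm 0).1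
        rwa [zero_add, F0, mul_zero] at this
      · rw [hder.deriv, S_eq_zero P hp, zero_mul, add_zero]
        exact mul_ne_zero (S_deriv_ne P hp) (S_ne_zero P hp2)
    by_cases hp2 : p + (d + k) ∈ P.lattice
    · right
      refine ⟨?_, by simp [S_eq_zero P hp2], ?_⟩
      · obtain ⟨m, hm⟩ := hq _ hp2
        have := (hm (-(d + k))).1
        rwa [F1, mul_zero, neg_add_cancel_comm_assoc] at this
      · rw [hder.deriv, S_eq_zero P hp2, mul_zero, zero_add]
        exact mul_ne_zero (S_ne_zero P hp) (S_deriv_ne P hp2)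
    · left
      exact mul_ne_zero (S_ne_zero P hp) (S_ne_zero P hp2)
  · have : -d + (d + k) = k := by ring
    rw [this]
    exact mul_ne_zero (S_ne_zero P (fun h ↦ hd (by simpa using h))) (S_ne_zero P hk)

lemma three_term (x d k l : ℂ) (hk : k ∉ P.lattice) :
    S P (x + k) * S P (x + d) * (S P (d + l) * S P (l - k))
      - S P x * S P (x + (d + k)) * (S P (d + l - k) * S P l)
      + S P (x + (k - l)) * S P (x + (d + l)) * (S P k * S P d) = 0 := by
  have hcount : (P.lattice : Set ℂ).Countable := by
    have : Countable P.lattice := P.latticeEquivProd.toEquiv.countable_iff.mpr inferInstance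
    exact Set.to_countable _
  have hc2 : ((P.lattice : Set ℂ) ∪ (fun z ↦ z - k) '' (P.lattice : Set ℂ)).Countable :=
    hcount.union (hcount.image _)
  have hdense := hc2.dense_compl ℝ
  have hS : Continuous (S P) := (S_diff P).continuous
  have := Continuous.ext_on hdense (f := fun d ↦
      S P (x + k) * S P (x + d) * (S P (d + l) * S P (l - k))
      - S P x * S P (x + (d + k)) * (S P (d + l - k) * S P l)
      + S P (x + (k - l)) * S P (x + (d + l)) * (S P k * S P d)) (g := fun _ ↦ 0)
    (by fun_prop) continuous_const (by
      intro d hd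
      simp only [Set.mem_compl_iff, Set.mem_union, not_or] at hd
      exact three_term_generic P x d k l hd.1 hk fun h ↦ hd.2 ⟨d + k, h, by simp⟩)
  exact congrFun this d

/-- the period pair of an `EllLattice` -/
def toPP (L : EllLattice) : PeriodPair where
  ω₁ := L.ω₁
  ω₂ := L.ω₂
  indep := by
    rw [LinearIndependent.pair_iff]
    exact L.indep

lemma mem_iff (L : EllLattice) (z : ℂ) : z ∈ (toPP L).lattice ↔ L.mem z := by
  rw [PeriodPair.mem_lattice, EllLattice.mem]
  simp only [toPP, zsmul_eq_mul, eq_comm]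

lemma sigma_eq (L : EllLattice) (z : ℂ) : L.sigma z = S (toPP L) z := by
  rw [EllLattice.sigma, S]
  congr 1
  rw [← (toPP L).latticeEquivProd.symm.toEquiv.tprod_eq]
  have e : ∀ p : ℤ × ℤ, (((toPP L).latticeEquivProd.symm.toEquiv p : (toPP L).lattice) : ℂ)
      = L.per p := by
    intro p
    have := (toPP L).latticeEquiv_symm_apply p
    refine Eq.trans this ?_
    simp [EllLattice.per, toPP]
  simp only [e]
  have := tprod_subtype_eq_of_mulSupport_subset (f := fun p : ℤ × ℤ ↦ E (L.per p) z)
    (s := {p | p ≠ 0}) (by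
      intro p hp h0
      subst h0
      exact hp (by simp [EllLattice.per, E_zero]))
  exact this

end SigAux

/-- The addition formula for the Lamé function:
`Ψ_ξ(κ)Ψ_δ(λ) = e^{η_δ(ξ)κ} Ψ_{ξ+δ}(κ) Ψ_δ(λ−κ) + e^{η_δ(ξ)λ} Ψ_ξ(κ−λ) Ψ_{ξ+δ}(λ)`. -/
theorem Psi_addition_formula (L : EllLattice) (ξ δ κ lam : ℂ)
    (h1 : ¬ L.mem ξ) (h2 : ¬ L.mem δ) (h3 : ¬ L.mem κ) (h4 : ¬ L.mem lam)
    (h5 : ¬ L.mem (ξ + δ)) (h6 : ¬ L.mem (κ - lam)) (h7 : ¬ L.mem (lam - κ))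
    (h8 : ¬ L.mem (ξ + κ)) (h9 : ¬ L.mem (δ + lam)) (h10 : ¬ L.mem (ξ + δ + κ))
    (h11 : ¬ L.mem (ξ + δ + lam)) (h12 : ¬ L.mem (ξ + κ - lam))
    (h13 : ¬ L.mem (δ + lam - κ)) :
    L.Psi ξ κ * L.Psi δ lam =
      Complex.exp (L.eta δ ξ * κ) * L.Psi (ξ + δ) κ * L.Psi δ (lam - κ) +
      Complex.exp (L.eta δ ξ * lam) * L.Psi ξ (κ - lam) * L.Psi (ξ + δ) lam := by
  simp only [← SigAux.mem_iff] at *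
  have hid := SigAux.three_term (SigAux.toPP L) ξ δ κ lam h3
  have n1 := SigAux.S_ne_zero _ h1
  have n2 := SigAux.S_ne_zero _ h2
  have n3 := SigAux.S_ne_zero _ h3
  have n4 := SigAux.S_ne_zero _ h4
  have n5 := SigAux.S_ne_zero _ h5
  have n7 := SigAux.S_ne_zero _ h7
  simp only [EllLattice.Psi, EllLattice.Phi, EllLattice.eta, SigAux.sigma_eq]
  generalize L.zeta (ξ + δ) = z3
  generalize L.zeta ξ = z1
  generalize L.zeta δ = z2
  have e1 : Complex.exp ((z3 - z1 - z2) * κ) * Complex.exp (-z3 * κ) *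
      Complex.exp (-z2 * (lam - κ)) = Complex.exp (-z1 * κ) * Complex.exp (-z2 * lam) := by
    simp only [← Complex.exp_add]; congr 1; ring
  have e2 : Complex.exp ((z3 - z1 - z2) * lam) * Complex.exp (-z1 * (κ - lam)) *
      Complex.exp (-z3 * lam) = Complex.exp (-z1 * κ) * Complex.exp (-z2 * lam) := by
    simp only [← Complex.exp_add]; congr 1; ring
  set S := SigAux.S (SigAux.toPP L) with hS
  have a1 : S (κ - lam) = - S (lam - κ) := by rw [← neg_sub, hS, SigAux.S_neg]
  have a2 : ξ + δ + κ = ξ + (δ + κ) := by ring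
  have a3 : ξ + δ + lam = ξ + (δ + lam) := by ring
  have a4 : δ + (lam - κ) = δ + lam - κ := by ring
  rw [a1, a2, a3, a4]
  have key : S (ξ + κ) / (S ξ * S κ) * (S (δ + lam) / (S δ * S lam)) =
      S (ξ + (δ + κ)) / (S (ξ + δ) * S κ) * (S (δ + lam - κ) / (S δ * S (lam - κ))) +
      S (ξ + (κ - lam)) / (S ξ * - S (lam - κ)) * (S (ξ + (δ + lam)) / (S (ξ + δ) * S lam)) := by
    field_simp
    linear_combination hid
  linear_combination (Complex.exp (-z1 * κ) * Complex.exp (-z2 * lam)) * key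
    - (S (ξ + (δ + κ)) / (S (ξ + δ) * S κ) * (S (δ + lam - κ) / (S δ * S (lam - κ)))) * e1
    - (S (ξ + (κ - lam)) / (S ξ * - S (lam - κ)) *
        (S (ξ + (δ + lam)) / (S (ξ + δ) * S lam))) * e2
end
end

section
/- For all ξ, κ, λ ∈ ℂ such that ξ, κ, λ, κ+λ, ξ+κ, ξ+λ, ξ+κ+λ ∉ Λ, one has Ψ_ξ(κ)·Ψ_ξ(λ) = Ψ_ξ(κ+λ)·[ζ(ξ) + ζ(κ) + ζ(λ) − ζ(ξ+κ+λ)]. -/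
open scoped BigOperators

noncomputable section

namespace PeriodPair

/-- The elementary factor of the sigma product. -/
def sfac (l z : ℂ) : ℂ := (1 - z / l) * Complex.exp (z / l + z ^ 2 / (2 * l ^ 2))

/-- The product part of sigma. -/
def sprod (L : PeriodPair) (z : ℂ) : ℂ := ∏' l : L.lattice, sfac l z

lemma elem_bound (u : ℂ) (hu : ‖u‖ ≤ 1 / 2) :
    ‖(1 - u) * Complex.exp (u + u ^ 2 / 2) - 1‖ ≤ 10 * ‖u‖ ^ 3 := by
  have hw : ‖u + u ^ 2 / 2‖ ≤ 5 / 4 * ‖u‖ := by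
    calc _ ≤ ‖u‖ + ‖u ^ 2 / 2‖ := norm_add_le _ _
      _ = ‖u‖ + ‖u‖ * ‖u‖ / 2 := by simp [sq]
      _ ≤ _ := by nlinarith [norm_nonneg u]
  have hR := Complex.exp_bound (x := u + u ^ 2 / 2) (by linarith) (n := 3) (by norm_num)
  set w := u + u ^ 2 / 2 with hwdef
  simp only [Finset.sum_range_succ, Finset.sum_range_zero] at hR
  norm_num [Nat.factorial] at hR
  set R := Complex.exp w - (1 + w + w ^ 2 / 2) with hRdef
  have e : (1 - u) * Complex.exp w - 1 =
      u ^ 3 * (-1 / 2 - 3 / 8 * u - 1 / 8 * u ^ 2) + (1 - u) * R := by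
    rw [hRdef, hwdef]; ring
  have hw3 : ‖w‖ ^ 3 ≤ 2 * ‖u‖ ^ 3 := by
    calc ‖w‖ ^ 3 ≤ (5 / 4 * ‖u‖) ^ 3 := by gcongr
      _ ≤ _ := by rw [mul_pow]; gcongr; norm_num
  have h1 : ‖(-1 / 2 - 3 / 8 * u - 1 / 8 * u ^ 2 : ℂ)‖ ≤ 1 := by
    calc _ ≤ ‖(-1 / 2 : ℂ)‖ + ‖3 / 8 * u‖ + ‖1 / 8 * u ^ 2‖ :=
          (norm_sub_le _ _).trans (by gcongr; exact norm_sub_le _ _)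
      _ = 1 / 2 + 3 / 8 * ‖u‖ + 1 / 8 * ‖u‖ ^ 2 := by simp
      _ ≤ 1 := by nlinarith [norm_nonneg u]
  have h2 : ‖1 - u‖ ≤ 3 / 2 := by
    refine (norm_sub_le _ _).trans ?_
    simp; linarith
  rw [e]
  calc _ ≤ ‖u‖ ^ 3 * ‖(-1 / 2 - 3 / 8 * u - 1 / 8 * u ^ 2 : ℂ)‖ + ‖1 - u‖ * ‖R‖ := by
        refine (norm_add_le _ _).trans ?_
        simp
    _ ≤ ‖u‖ ^ 3 * 1 + 3 / 2 * (2 * ‖u‖ ^ 3 * (2 / 9)) := by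
        gcongr
        refine hR.trans ?_
        gcongr
    _ ≤ _ := by nlinarith [pow_nonneg (norm_nonneg u) 3]

variable (L : PeriodPair)

lemma sfac_zero_left (z : ℂ) : sfac 0 z = 1 := by simp [sfac]

lemma sfac_bound (r : ℝ) (hr : 0 < r) (z l : ℂ) (hz : ‖z‖ < r) (hl : 2 * r ≤ ‖l‖) :
    ‖sfac l z - 1‖ ≤ 10 * r ^ 3 * ‖l‖ ^ (-3 : ℝ) := by
  have hl0 : 0 < ‖l‖ := by linarith
  have h := elem_bound (z / l) (by rw [norm_div, div_le_iff₀ hl0]; linarith)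
  have e : z / l + (z / l) ^ 2 / 2 = z / l + z ^ 2 / (2 * l ^ 2) := by
    rw [div_pow, div_div, mul_comm]
  rw [e] at h
  refine h.trans ?_
  have : ‖l‖ ^ (-3 : ℝ) = (‖l‖ ^ 3)⁻¹ := by norm_cast
  rw [this, norm_div, div_pow, mul_assoc, div_eq_mul_inv]
  gcongr

lemma summable_cube : Summable fun l : L.lattice ↦ ‖l‖ ^ (-3 : ℝ) :=
  ZLattice.summable_norm_rpow _ _ (by simp; norm_num)

lemma sfac_eventually (r : ℝ) (hr : 0 < r) : ∀ᶠ l : L.lattice in Filter.cofinite,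
    ∀ z ∈ Metric.ball (0 : ℂ) r, ‖sfac l z - 1‖ ≤ 10 * r ^ 3 * ‖l‖ ^ (-3 : ℝ) := by
  refine (isCompact_iff_finite.mp (isCompact_closedBall (0 : L.lattice) (2 * r))).subset ?_
  intro l hl
  by_contra hl'
  apply hl
  intro z hz
  simp at hl' hz
  exact sfac_bound r hr z l hz hl'.le

lemma sfac_diff (l : ℂ) : Differentiable ℂ (sfac l) := by
  unfold sfac
  have : Differentiable ℂ fun z : ℂ => z / l := by fun_prop
  have : Differentiable ℂ fun z : ℂ => z ^ 2 / (2 * l ^ 2) := by fun_prop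
  fun_prop

lemma sprod_mult (r : ℝ) (hr : 0 < r) :
    HasProdLocallyUniformlyOn (fun (l : L.lattice) z ↦ sfac l z) L.sprod (Metric.ball 0 r) := by
  have := Summable.hasProdLocallyUniformlyOn_one_add (f := fun (l : L.lattice) z ↦ sfac l z - 1)
    (Metric.isOpen_ball (x := (0:ℂ)) (ε := r))
    (L.summable_cube.mul_left (10 * r ^ 3)) (L.sfac_eventually r hr)
    (fun i => by
      have := (sfac_diff (i : ℂ)).continuous
      fun_prop)
  have h2 : (fun (l : L.lattice) (z : ℂ) ↦ 1 + (sfac l z - 1)) = fun (l : L.lattice) z ↦ sfac l z := by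
    ext l z; ring
  have h3 : (fun z ↦ ∏' l : L.lattice, (1 + (sfac l z - 1))) = L.sprod := by
    ext z; simp [sprod]
  rw [← h2, ← h3]
  exact this

lemma sprod_diff : Differentiable ℂ L.sprod := by
  intro z
  have h := L.sprod_mult (‖z‖ + 1) (by positivity)
  have := TendstoLocallyUniformlyOn.differentiableOn h
    (.of_forall fun s ↦ .fun_finsetProd fun i _ ↦ (sfac_diff i).differentiableOn) Metric.isOpen_ball
  exact this.differentiableAt (Metric.isOpen_ball.mem_nhds (by simp))

lemma sfac_ne_zero {l z : ℂ} (h : z ≠ l) : sfac l z ≠ 0 := by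
  by_cases hl : l = 0
  · simp [hl, sfac]
  · refine mul_ne_zero ?_ (Complex.exp_ne_zero _)
    rw [sub_ne_zero]
    intro h1
    exact h ((div_eq_one_iff_eq hl).mp h1.symm)

lemma sprod_ne_zero {z : ℂ} (hz : z ∉ L.lattice) : L.sprod z ≠ 0 := by
  have h := tprod_one_add_ne_zero_of_summable (f := fun l : L.lattice ↦ sfac l z - 1)
    (fun l => by
      simpa using sfac_ne_zero (l := (l:ℂ)) (z := z) (fun h => hz (h ▸ l.2)))
    (by
      refine Summable.of_norm_bounded_eventually (L.summable_cube.mul_left (10 * (‖z‖ + 1) ^ 3)) ?_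
      filter_upwards [L.sfac_eventually (‖z‖ + 1) (by positivity)] with l hl
      simpa using hl z (by simp))
  simpa [sprod] using h

lemma sprod_zero : L.sprod 0 = 1 := by simp [sprod, sfac]

lemma sprod_neg (z : ℂ) : L.sprod (-z) = L.sprod z := by
  simp only [sprod]
  rw [← (Equiv.neg L.lattice).tprod_eq]
  congr! 2 with l
  simp [sfac]

/-- The Weierstrass sigma function. -/
def sig (z : ℂ) : ℂ := z * L.sprod z

lemma sig_diff : Differentiable ℂ L.sig := differentiable_id.mul L.sprod_diff

lemma sig_neg (z : ℂ) : L.sig (-z) = - L.sig z := by simp [sig, sprod_neg]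

lemma sig_ne_zero {z : ℂ} (hz : z ∉ L.lattice) : L.sig z ≠ 0 :=
  mul_ne_zero (fun h => hz (h ▸ L.lattice.zero_mem)) (L.sprod_ne_zero hz)

lemma sig_zero : L.sig 0 = 0 := by simp [sig]

lemma deriv_sig_zero : deriv L.sig 0 = 1 := by
  have := (hasDerivAt_id (0:ℂ)).mul (L.sprod_diff 0).hasDerivAt
  simpa [sprod_zero] using! this.deriv

end PeriodPair

namespace PeriodPair

variable (L : PeriodPair)

/-- Summand of the zeta function. -/
def zterm (l z : ℂ) : ℂ := if l = 0 then 0 else 1 / (z - l) + 1 / l + z / l ^ 2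

lemma zterm_bound (r : ℝ) (hr : 0 < r) (z l : ℂ) (hz : ‖z‖ < r) (hl : 2 * r ≤ ‖l‖) :
    ‖zterm l z‖ ≤ 2 * r ^ 2 * ‖l‖ ^ (-3 : ℝ) := by
  have hl0 : 0 < ‖l‖ := by linarith
  have hl1 : l ≠ 0 := norm_pos_iff.mp hl0
  have hzl : z - l ≠ 0 := by
    rw [sub_ne_zero]; rintro rfl; linarith
  have e : zterm l z = z ^ 2 / (l ^ 2 * (z - l)) := by
    rw [zterm, if_neg hl1]; field_simp; ring
  have h2 : ‖l‖ / 2 ≤ ‖z - l‖ := by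
    rw [norm_sub_rev]
    exact .trans (by linarith) (norm_sub_norm_le l z)
  have : ‖l‖ ^ (-3 : ℝ) = (‖l‖ ^ 3)⁻¹ := by norm_cast
  rw [e, this, norm_div, norm_mul, norm_pow, norm_pow]
  calc _ ≤ r ^ 2 / (‖l‖ ^ 2 * (‖l‖ / 2)) := by gcongr
    _ = _ := by field_simp

lemma zterm_hasSum :
    HasSumLocallyUniformly (fun (l : L.lattice) z ↦ zterm l z)
      (fun z ↦ ∑' l : L.lattice, zterm l z) := by
  refine L.hasSumLocallyUniformly_aux (u := fun r l => 2 * r ^ 2 * ‖l‖ ^ (-3 : ℝ)) _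
    (fun _ _ ↦ L.summable_cube.mul_left _) fun r hr ↦
    Filter.eventually_atTop.mpr ⟨2 * r, ?_⟩
  rintro _ h s hs l rfl
  exact zterm_bound r hr s l hs h

lemma zterm_hasDerivAt {l z : ℂ} (h : z ≠ l) :
    HasDerivAt (zterm l) (-(if l = 0 then 0 else (1 / (z - l) ^ 2 - 1 / l ^ 2))) z := by
  by_cases hl : l = 0
  · subst hl
    have : zterm 0 = fun _ => 0 := by ext z; simp [zterm]
    rw [this]; simpa using hasDerivAt_const z (0:ℂ)
  · have : zterm l = fun z => (z - l)⁻¹ + 1 / l + z / l ^ 2 := by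
      ext z; simp [zterm, hl]
    rw [this, if_neg hl]
    have h1 : HasDerivAt (fun z : ℂ => z - l) 1 z := (hasDerivAt_id z).sub_const l
    have h2 := ((h1.fun_inv (sub_ne_zero.mpr h)).add_const (1 / l)).add
      ((hasDerivAt_id z).div_const (l ^ 2))
    convert! h2 using 1
    ring

lemma compl_open : IsOpen ((L.lattice : Set ℂ)ᶜ) := L.isClosed_lattice.isOpen_compl

lemma zsum_hasDerivAt {z : ℂ} (hz : z ∉ L.lattice) :
    HasDerivAt (fun z ↦ ∑' l : L.lattice, zterm l z) (-(L.weierstrassPExcept 0 z)) z := by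
  have hne : ∀ x ∈ ((L.lattice : Set ℂ)ᶜ), ∀ l : L.lattice, x ≠ l := fun x hx l h => hx (h ▸ l.2)
  have hev : ∀ s : Finset L.lattice, DifferentiableOn ℂ (fun z => ∑ l ∈ s, zterm l z)
      ((L.lattice : Set ℂ)ᶜ) := fun s =>
    .fun_sum fun l _ x hx =>
      (zterm_hasDerivAt (hne x hx l)).differentiableAt.differentiableWithinAt
  have ht := L.zterm_hasSum.tendstoLocallyUniformlyOn (s := ((L.lattice : Set ℂ)ᶜ))
  have hd : DifferentiableAt ℂ (fun z ↦ ∑' l : L.lattice, zterm l z) z :=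
    (ht.differentiableOn (.of_forall hev) L.compl_open).differentiableAt
      (L.compl_open.mem_nhds hz)
  have h1 := (ht.deriv (.of_forall hev) L.compl_open).tendsto_at hz
  have h2 : HasSum (fun l : L.lattice => deriv (zterm l) z)
      (deriv (fun z ↦ ∑' l : L.lattice, zterm l z) z) := by
    refine h1.congr fun s => ?_
    simp only [Function.comp_apply]
    rw [deriv_fun_sum]
    exact fun l _ => (zterm_hasDerivAt (hne z hz l)).differentiableAt
  have h3 := (L.hasSum_weierstrassPExcept 0 z).neg
  have h4 : deriv (fun z ↦ ∑' l : L.lattice, zterm l z) z = -(L.weierstrassPExcept 0 z) := by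
    refine h2.unique ?_
    convert! h3 using 2 with l
    exact (zterm_hasDerivAt (hne z hz l)).deriv
  rw [← h4]
  exact hd.hasDerivAt

lemma logDeriv_sfac {l z : ℂ} (h : z ≠ l) : logDeriv (sfac l) z = zterm l z := by
  by_cases hl : l = 0
  · subst hl
    have : sfac 0 = fun _ => 1 := by ext z; exact sfac_zero_left z
    rw [this]; simp [zterm, logDeriv]
  · have h0 : 1 - z / l ≠ 0 := by
      rw [sub_ne_zero]
      intro h1
      exact h ((div_eq_one_iff_eq hl).mp h1.symm)
    have h1 : HasDerivAt (fun z : ℂ => 1 - z / l) (-(1 / l)) z := by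
      simpa using ((hasDerivAt_id z).div_const l).const_sub 1
    have h2 : HasDerivAt (fun z : ℂ => z / l + z ^ 2 / (2 * l ^ 2)) (1 / l + (2 * z) / (2 * l ^ 2)) z := by
      have := ((hasDerivAt_id z).div_const l).add ((hasDerivAt_pow 2 z).div_const (2 * l ^ 2))
      simpa using! this
    have h3 := h1.mul h2.cexp
    have h4 : deriv (sfac l) z = _ := h3.deriv
    have hz : z - l ≠ 0 := sub_ne_zero.mpr h
    have hz' : l - z ≠ 0 := sub_ne_zero.mpr h.symm
    rw [logDeriv_apply, h4, zterm, if_neg hl, sfac]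
    have := Complex.exp_ne_zero (z / l + z ^ 2 / (2 * l ^ 2))
    set E := Complex.exp (z / l + z ^ 2 / (2 * l ^ 2))
    have h0' : 1 - z / l = (l - z) / l := by field_simp
    rw [h0']
    field_simp
    ring

/-- The Weierstrass zeta function. -/
def zt (z : ℂ) : ℂ := deriv L.sig z / L.sig z

lemma zt_eq {z : ℂ} (hz : z ∉ L.lattice) : L.zt z = 1 / z + ∑' l : L.lattice, zterm l z := by
  have hne : ∀ l : L.lattice, z ≠ l := fun l h => hz (h ▸ l.2)
  have hz0 : z ≠ 0 := fun h => hz (h ▸ L.lattice.zero_mem)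
  have h := logDeriv_tprod_eq_tsum (f := fun (l : L.lattice) z => sfac l z)
    (Metric.isOpen_ball (x := (0:ℂ)) (ε := ‖z‖ + 1)) (x := z) (by simp)
    (fun l => sfac_ne_zero (hne l)) (fun l => (sfac_diff l).differentiableOn)
    (by
      have := (L.zterm_hasSum.hasSum (x := z)).summable
      convert! this using 2 with l
      exact logDeriv_sfac (hne l))
    (L.sprod_mult (‖z‖ + 1) (by positivity)).multipliableLocallyUniformlyOn
    (L.sprod_ne_zero hz)
  have h1 : logDeriv L.sig z = logDeriv (fun z => z) z + logDeriv L.sprod z :=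
    logDeriv_mul (f := fun z => z) (g := L.sprod) z hz0 (L.sprod_ne_zero hz)
      differentiableAt_fun_id (L.sprod_diff z)
  have h2 : L.zt z = logDeriv L.sig z := rfl
  rw [h2, h1]
  congr 1
  · simp [logDeriv_apply]
  · refine h.trans (tsum_congr fun l => logDeriv_sfac (hne l))

lemma zt_hasDerivAt {z : ℂ} (hz : z ∉ L.lattice) :
    HasDerivAt L.zt (-(L.weierstrassP z)) z := by
  have hz0 : z ≠ 0 := fun h => hz (h ▸ L.lattice.zero_mem)
  have h1 := (hasDerivAt_inv hz0).add (L.zsum_hasDerivAt hz)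
  have h2 := L.weierstrassPExcept_add 0 z
  have h3 : L.zt =ᶠ[nhds z] (fun z => z⁻¹) + (fun z ↦ ∑' l : L.lattice, zterm l z) := by
    filter_upwards [L.compl_open.mem_nhds hz] with w hw
    simpa using L.zt_eq hw
  convert! h1.congr_of_eventuallyEq h3 using 1
  rw [← h2]
  simp

lemma lattice_countable : (L.lattice : Set ℂ).Countable := by
  have : Countable L.lattice := L.latticeEquivProd.toEquiv.countable_iff.mpr inferInstance
  exact Set.countable_coe_iff.mp this

lemma compl_preconn : IsPreconnected ((L.lattice : Set ℂ)ᶜ) :=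
  (L.lattice_countable.isPathConnected_compl_of_one_lt_rank (by simp)).isConnected.isPreconnected

lemma const_of_hasDerivAt_zero {f : ℂ → ℂ}
    (hf : ∀ z ∉ L.lattice, HasDerivAt f 0 z) : ∃ a, ∀ z ∉ L.lattice, f z = a := by
  refine L.compl_open.exists_is_const_of_fderiv_eq_zero (𝕜 := ℂ) L.compl_preconn
    (fun z hz => (hf z hz).differentiableAt.differentiableWithinAt) (fun z hz => ?_)
  have := (hf z hz).hasFDerivAt.fderiv
  simpa using this

lemma add_mem_iff {z l : ℂ} (hl : l ∈ L.lattice) : z + l ∈ L.lattice ↔ z ∈ L.lattice :=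
  ⟨fun h => by simpa using L.lattice.sub_mem h hl, fun h => L.lattice.add_mem h hl⟩

lemma zt_quasi (l : L.lattice) : ∃ a, ∀ z ∉ L.lattice, L.zt (z + l) = L.zt z + a := by
  obtain ⟨a, ha⟩ := L.const_of_hasDerivAt_zero (f := fun z => L.zt (z + l) - L.zt z) (by
    intro z hz
    have hz' : z + l ∉ L.lattice := by rwa [L.add_mem_iff l.2]
    have := ((L.zt_hasDerivAt hz').comp_add_const z l).sub (L.zt_hasDerivAt hz)
    simpa using! this)
  exact ⟨a, fun z hz => by rw [← ha z hz]; ring⟩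

lemma sig_hasDerivAt {z : ℂ} (hz : z ∉ L.lattice) :
    HasDerivAt L.sig (L.zt z * L.sig z) z := by
  have : L.zt z * L.sig z = deriv L.sig z := by
    rw [zt, div_mul_cancel₀ _ (L.sig_ne_zero hz)]
  rw [this]; exact (L.sig_diff z).hasDerivAt

/-- Quasi-periodicity of sigma. -/
lemma sig_quasi (l : L.lattice) :
    ∃ a b : ℂ, b ≠ 0 ∧ ∀ z, L.sig (z + l) = b * Complex.exp (a * z) * L.sig z := by
  obtain ⟨a, ha⟩ := L.zt_quasi l
  obtain ⟨b, hb⟩ := L.const_of_hasDerivAt_zero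
    (f := fun z => L.sig (z + l) * Complex.exp (-(a * z)) / L.sig z) (by
    intro z hz
    have hz' : z + l ∉ L.lattice := by rwa [L.add_mem_iff l.2]
    have h1 := (L.sig_hasDerivAt hz').comp_add_const z l
    have h2 : HasDerivAt (fun z => Complex.exp (-(a * z))) (Complex.exp (-(a * z)) * (-(a * 1))) z :=
      (((hasDerivAt_id z).const_mul a).neg).cexp
    have h3 := (h1.mul h2).div (L.sig_hasDerivAt hz) (L.sig_ne_zero hz)
    convert! h3 using 1
    rw [ha z hz]
    simp only [Pi.mul_apply]
    field_simp [L.sig_ne_zero hz]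
    ring)
  have key : ∀ z, L.sig (z + l) = b * Complex.exp (a * z) * L.sig z := by
    have hd : Dense ((L.lattice : Set ℂ)ᶜ) := L.lattice_countable.dense_compl ℝ
    have hc := L.sig_diff.continuous
    have := Continuous.ext_on (f := fun z => L.sig (z + l))
      (g := fun z => b * Complex.exp (a * z) * L.sig z) hd (by fun_prop) (by fun_prop) (by
      intro z hz
      have h1 := hb z hz
      have h2 := L.sig_ne_zero hz
      simp only
      rw [← h1, div_mul_eq_mul_div, div_mul_cancel₀ _ h2, mul_assoc, ← Complex.exp_add]
      simp)
    exact fun z => congrFun this z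
  refine ⟨a, b, ?_, key⟩
  rintro rfl
  have hz := L.ω₁_div_two_notMem_lattice
  have hz' : L.ω₁ / 2 + l ∉ L.lattice := by rwa [L.add_mem_iff l.2]
  exact L.sig_ne_zero hz' (by rw [key]; simp)

lemma sig_eq_zero_iff (z : ℂ) : L.sig z = 0 ↔ z ∈ L.lattice := by
  refine ⟨fun h => by_contra fun hz => L.sig_ne_zero hz h, fun h => ?_⟩
  obtain ⟨a, b, _, hab⟩ := L.sig_quasi ⟨z, h⟩
  have := hab 0
  simpa [sig_zero] using this

lemma deriv_sig_quasi {l : L.lattice} {a b : ℂ}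
    (hab : ∀ z, L.sig (z + l) = b * Complex.exp (a * z) * L.sig z) (z : ℂ) :
    deriv L.sig (z + l) = b * Complex.exp (a * z) * (deriv L.sig z + a * L.sig z) := by
  have h1 := (L.sig_diff (z + l)).hasDerivAt.comp_add_const z l
  have h2 : HasDerivAt (fun z => Complex.exp (a * z)) (Complex.exp (a * z) * (a * 1)) z :=
    ((hasDerivAt_id z).const_mul a).cexp
  have h3 := (h2.const_mul b).mul (L.sig_diff z).hasDerivAt
  have h4 : (fun z => L.sig (z + l)) =
    (fun z => b * Complex.exp (a * z)) * L.sig := funext hab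
  rw [h4] at h1
  rw [h1.unique h3]
  ring

lemma deriv_sig_ne_zero {z : ℂ} (hz : z ∈ L.lattice) : deriv L.sig z ≠ 0 := by
  obtain ⟨a, b, hb, hab⟩ := L.sig_quasi ⟨z, hz⟩
  have := L.deriv_sig_quasi hab 0
  simp [sig_zero, deriv_sig_zero] at this
  rwa [this]

end PeriodPair

namespace PeriodPair

lemma exists_quotient {D H : ℂ → ℂ} (hD : Differentiable ℂ D) (hH : Differentiable ℂ H)
    (h : ∀ w, D w = 0 → H w = 0 ∧ deriv D w ≠ 0) :
    ∃ Q : ℂ → ℂ, Differentiable ℂ Q ∧ ∀ z, H z = Q z * D z := by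
  classical
  refine ⟨fun z => if D z = 0 then deriv H z / deriv D z else H z / D z, ?_, ?_⟩
  · intro w
    by_cases hw : D w = 0
    · obtain ⟨hHw, hDw⟩ := h w hw
      have hd : ∀ {f : ℂ → ℂ}, Differentiable ℂ f → DifferentiableAt ℂ (dslope f w) w :=
        fun hf => ((Complex.differentiableOn_dslope (s := Set.univ) (c := w) Filter.univ_mem).mpr
          hf.differentiableOn).differentiableAt Filter.univ_mem
      have hne : dslope D w w ≠ 0 := by simpa using hDw
      have hq : DifferentiableAt ℂ (fun z => dslope H w z / dslope D w z) w :=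
        (hd hH).div (hd hD) hne
      refine hq.congr_of_eventuallyEq ?_
      filter_upwards [(hd hD).continuousAt.eventually_ne hne] with z hz
      by_cases hzw : z = w
      · subst hzw; simp [hw]
      · have hzw' : z - w ≠ 0 := sub_ne_zero.mpr hzw
        have e1 : D z = (z - w) * dslope D w z := by
          have := sub_smul_dslope D w z
          simpa [hw] using this.symm
        have e2 : H z = (z - w) * dslope H w z := by
          have := sub_smul_dslope H w z
          simpa [hHw] using this.symm
        have : D z ≠ 0 := by rw [e1]; exact mul_ne_zero hzw' hz
        rw [if_neg this, e1, e2, mul_div_mul_left _ _ hzw']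
    · have : DifferentiableAt ℂ (fun z => H z / D z) w := (hH w).div (hD w) hw
      refine this.congr_of_eventuallyEq ?_
      filter_upwards [(hD w).continuousAt.eventually_ne hw] with z hz
      rw [if_neg hz]
  · intro z
    by_cases hz : D z = 0
    · simp [hz, (h z hz).1]
    · simp [hz]

variable (L : PeriodPair)

lemma periodic_const {Q : ℂ → ℂ} (hQ : Differentiable ℂ Q)
    (hp : ∀ (l : L.lattice) z, Q (z + l) = Q z) (z w : ℂ) : Q z = Q w := by
  refine hQ.apply_eq_apply_of_bounded ?_ z w
  have hb := (ZSpan.fundamentalDomain_isBounded L.basis)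
  have hc : IsCompact (closure (ZSpan.fundamentalDomain L.basis)) := hb.isCompact_closure
  refine (hc.image hQ.continuous).isBounded.subset ?_
  rintro _ ⟨z, rfl⟩
  refine ⟨ZSpan.fract L.basis z, subset_closure (ZSpan.fract_mem_fundamentalDomain L.basis z), ?_⟩
  have hm : (ZSpan.floor L.basis z : ℂ) ∈ L.lattice := by
    rw [L.lattice_eq_span_range_basis]; exact (ZSpan.floor L.basis z).2
  have := hp ⟨_, hm⟩ (ZSpan.fract L.basis z)
  rw [← this]
  simp [ZSpan.fract_apply]

/-- The difference of the two sides of the identity, cleared of denominators. -/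
def Hf (k m z : ℂ) : ℂ :=
  L.sig (z + k) * L.sig (z + m) * L.sig (k + m) -
    (L.sig k * L.sig m * (deriv L.sig z * L.sig (z + (k + m)) - L.sig z * deriv L.sig (z + (k + m)))
      + L.sig z * L.sig (z + (k + m)) * (deriv L.sig k * L.sig m + L.sig k * deriv L.sig m))

/-- The denominator. -/
def Df (k m z : ℂ) : ℂ := L.sig z * L.sig (z + (k + m))

lemma Hf_zero (k m : ℂ) : L.Hf k m 0 = 0 := by
  simp [Hf, sig_zero, deriv_sig_zero]

lemma deriv_sig_neg (z : ℂ) : deriv L.sig (-z) = deriv L.sig z := by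
  have h1 : (fun z => L.sig (-z)) = fun z => - L.sig z := funext L.sig_neg
  have h2 := deriv_comp_neg L.sig z
  rw [h1] at h2
  simpa using h2.symm

lemma Hf_neg_add (k m : ℂ) : L.Hf k m (-(k + m)) = 0 := by
  have e1 : -(k + m) + k = -m := by ring
  have e2 : -(k + m) + m = -k := by ring
  simp only [Hf, e1, e2, sig_neg, neg_add_cancel, sig_zero, deriv_sig_zero]
  ring

lemma Hf_neg (k m : ℂ) : L.Hf k m (-k) = 0 := by
  have e2 : -k + (k + m) = m := by ring
  simp only [Hf, e2, sig_neg, deriv_sig_neg, neg_add_cancel, sig_zero]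
  ring

lemma Hf_quasi (k m : ℂ) (l : L.lattice) : ∃ c : ℂ → ℂ, (∀ z, c z ≠ 0) ∧
    ∀ z, L.Hf k m (z + l) = c z * L.Hf k m z ∧ L.Df k m (z + l) = c z * L.Df k m z := by
  obtain ⟨a, b, hb, hab⟩ := L.sig_quasi l
  have hab' := L.deriv_sig_quasi hab
  refine ⟨fun z => b ^ 2 * Complex.exp (a * z) ^ 2 * Complex.exp (a * k) * Complex.exp (a * m),
    fun z => by simp [hb], fun z => ?_⟩
  have e : ∀ x : ℂ, z + l + x = z + x + l := fun x => by ring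
  constructor
  · simp only [Hf, e, hab, hab', mul_add, Complex.exp_add]
    ring
  · simp only [Df, e, hab, mul_add, Complex.exp_add]
    ring

lemma Hf_eq_zero {k m : ℂ} (hk : k ∉ L.lattice) (hm : m ∉ L.lattice)
    (hkm : k + m ∉ L.lattice) (z : ℂ) : L.Hf k m z = 0 := by
  have hs := L.sig_diff
  have hs' : Differentiable ℂ (deriv L.sig) := hs.deriv
  have hD : Differentiable ℂ (L.Df k m) := by unfold Df; fun_prop
  have hH : Differentiable ℂ (L.Hf k m) := by unfold Hf; fun_prop
  have hdD : ∀ z, deriv (L.Df k m) z =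
      deriv L.sig z * L.sig (z + (k + m)) + L.sig z * deriv L.sig (z + (k + m)) := fun z =>
    ((hs z).hasDerivAt.mul ((hs (z + (k + m))).hasDerivAt.comp_add_const z (k + m))).deriv
  obtain ⟨Q, hQ, hQH⟩ := exists_quotient hD hH (by
    intro w hw
    rcases mul_eq_zero.mp hw with h0 | h0
    · have hw := (L.sig_eq_zero_iff w).mp h0
      constructor
      · obtain ⟨c, -, hc⟩ := L.Hf_quasi k m ⟨w, hw⟩
        have := (hc 0).1
        simpa [Hf_zero] using this
      · rw [hdD, h0, zero_mul, add_zero]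
        refine mul_ne_zero (L.deriv_sig_ne_zero hw) (L.sig_ne_zero ?_)
        rwa [add_comm, L.add_mem_iff hw]
    · have hw := (L.sig_eq_zero_iff _).mp h0
      constructor
      · obtain ⟨c, -, hc⟩ := L.Hf_quasi k m ⟨_, hw⟩
        have := (hc (-(k + m))).1
        have e : -(k + m) + (w + (k + m)) = w := by ring
        simpa only [e, Hf_neg_add, mul_zero] using this
      · rw [hdD, h0, mul_zero, zero_add]
        refine mul_ne_zero (L.sig_ne_zero fun hw' => hkm ?_) (L.deriv_sig_ne_zero hw)
        rwa [add_comm, L.add_mem_iff hw'] at hw)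
  have hD0 : ∀ z, z ∉ L.lattice → z + (k + m) ∉ L.lattice → L.Df k m z ≠ 0 := fun z h1 h2 =>
    mul_ne_zero (L.sig_ne_zero h1) (L.sig_ne_zero h2)
  have hper : ∀ (l : L.lattice) z, Q (z + l) = Q z := by
    intro l
    obtain ⟨c, hc0, hc⟩ := L.Hf_quasi k m l
    have hcount : ((L.lattice : Set ℂ) ∪ (fun z => z + (k + m)) ⁻¹' (L.lattice : Set ℂ)).Countable :=
      L.lattice_countable.union (L.lattice_countable.preimage (add_left_injective _))
    have hQc := hQ.continuous
    have := Continuous.ext_on (f := fun z => Q (z + l)) (g := Q) (hcount.dense_compl ℝ)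
      (by fun_prop) (by fun_prop) (by
      intro z hz
      simp only [Set.mem_compl_iff, Set.mem_union, not_or, Set.mem_preimage] at hz
      have h1 := hD0 z hz.1 hz.2
      have h2 := (hc z).1
      rw [hQH, hQH z, (hc z).2] at h2
      have h3 : c z * L.Df k m z * (Q (z + l) - Q z) = 0 := by linear_combination h2
      have := (mul_eq_zero.mp h3).resolve_left (mul_ne_zero (hc0 z) h1)
      exact sub_eq_zero.mp this)
    exact fun z => congrFun this z
  have hQk : Q (-k) = 0 := by
    have h := hQH (-k)
    rw [Hf_neg] at h
    refine (mul_eq_zero.mp h.symm).resolve_right (hD0 _ ?_ ?_)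
    · rwa [neg_mem_iff]
    · have e2 : -k + (k + m) = m := by ring
      rwa [e2]
  rw [hQH, L.periodic_const hQ hper z (-k), hQk, zero_mul]

end PeriodPair

namespace EllLattice

/-- The associated Mathlib period pair. -/
def toPair (L : EllLattice) : PeriodPair where
  ω₁ := L.ω₁
  ω₂ := L.ω₂
  indep := by
    rw [LinearIndependent.pair_iff]
    exact L.indep

lemma mem_iff (L : EllLattice) (z : ℂ) : L.mem z ↔ z ∈ L.toPair.lattice := by
  rw [PeriodPair.mem_lattice]
  simp only [mem, toPair, zsmul_eq_mul, eq_comm]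

lemma sigma_eq (L : EllLattice) : L.sigma = L.toPair.sig := by
  ext z
  unfold sigma PeriodPair.sig PeriodPair.sprod
  congr 1
  rw [← L.toPair.latticeEquivProd.symm.toEquiv.tprod_eq]
  have e : ∀ p : ℤ × ℤ, ((L.toPair.latticeEquivProd.symm p : L.toPair.lattice) : ℂ) = L.per p := by
    intro p
    rw [PeriodPair.latticeEquiv_symm_apply]
    simp [per, toPair]
  have e2 : ∀ p : ℤ × ℤ, PeriodPair.sfac
      ((L.toPair.latticeEquivProd.symm.toEquiv p : L.toPair.lattice) : ℂ) z
      = PeriodPair.sfac (L.per p) z := fun p => congrArg (PeriodPair.sfac · z) (e p)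
  rw [tprod_congr e2]
  refine tprod_subtype_eq_of_mulSupport_subset (s := {p : ℤ × ℤ | p ≠ 0})
    (f := fun p => PeriodPair.sfac (L.per p) z) ?_
  intro p hp hp0
  apply hp
  have : p = 0 := hp0
  subst this
  simp [per, PeriodPair.sfac]

end EllLattice

/-- `Ψ_ξ(κ)Ψ_ξ(λ) = Ψ_ξ(κ+λ)·[ζ(ξ)+ζ(κ)+ζ(λ)−ζ(ξ+κ+λ)]`. -/
theorem Psi_same_suffix_product (L : EllLattice) (ξ κ lam : ℂ)
    (h1 : ¬ L.mem ξ) (h2 : ¬ L.mem κ) (h3 : ¬ L.mem lam)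
    (h4 : ¬ L.mem (κ + lam)) (h5 : ¬ L.mem (ξ + κ)) (h6 : ¬ L.mem (ξ + lam))
    (h7 : ¬ L.mem (ξ + κ + lam)) :
    L.Psi ξ κ * L.Psi ξ lam =
      L.Psi ξ (κ + lam) *
        (L.zeta ξ + L.zeta κ + L.zeta lam - L.zeta (ξ + κ + lam)) := by
  rw [L.mem_iff] at h1 h2 h3 h4 h5 h6 h7
  have hz : L.zeta = L.toPair.zt := by
    ext z; simp only [EllLattice.zeta, PeriodPair.zt, L.sigma_eq]
  have hH := L.toPair.Hf_eq_zero h2 h3 h4 ξ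
  simp only [EllLattice.Psi, EllLattice.Phi, hz, L.sigma_eq]
  rw [mul_add (-L.toPair.zt ξ) κ lam, Complex.exp_add]
  have g1 := L.toPair.sig_ne_zero h1
  have g2 := L.toPair.sig_ne_zero h2
  have g3 := L.toPair.sig_ne_zero h3
  have g4 := L.toPair.sig_ne_zero h4
  have g7 := L.toPair.sig_ne_zero h7
  rw [PeriodPair.Hf] at hH
  rw [add_assoc ξ κ lam] at g7 ⊢
  generalize Complex.exp (-L.toPair.zt ξ * κ) = E1
  generalize Complex.exp (-L.toPair.zt ξ * lam) = E2
  simp only [PeriodPair.zt]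
  field_simp
  linear_combination E1 * E2 * hH
end
end

section
/- (Frobenius elliptic Cauchy determinant formula.) Let N ≥ 1 and let ξ, x₁,…,x_N, y₁,…,y_N ∈ ℂ be such that ξ ∉ Λ, x_i + y_j ∉ Λ for all i,j, and ξ + Σ_{i=1}^N (x_i + y_i) ∉ Λ. Then the N×N determinant of the matrix with entries Φ_ξ(x_i + y_j) equals [σ(ξ + Σ_{i=1}^N (x_i + y_i))/σ(ξ)] · [∏_{1≤i<j≤N} σ(x_i − x_j)·σ(y_i − y_j)] / [∏_{i=1}^N ∏_{j=1}^N σ(x_i + y_j)]. -/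
open scoped BigOperators

noncomputable section

open Filter Topology

namespace EllLattice

variable (L : EllLattice)

/-- The associated Mathlib period pair. -/
def pp : PeriodPair where
  ω₁ := L.ω₁
  ω₂ := L.ω₂
  indep := LinearIndependent.pair_iff.mpr L.indep

lemma per_zero : L.per 0 = 0 := by simp [per]

lemma per_add (p q : ℤ × ℤ) : L.per (p + q) = L.per p + L.per q := by
  simp [per]; ring

lemma per_neg (p : ℤ × ℤ) : L.per (-p) = - L.per p := by
  simp [per]; ring

lemma per_eq_zero {p : ℤ × ℤ} : L.per p = 0 ↔ p = 0 := by
  constructor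
  · intro h
    have := L.indep p.1 p.2 (by simpa [per] using h)
    ext
    · exact_mod_cast this.1
    · exact_mod_cast this.2
  · rintro rfl
    exact L.per_zero

lemma mem_iff_s4 (z : ℂ) : L.mem z ↔ ∃ p, z = L.per p := by
  constructor
  · rintro ⟨m, n, h⟩
    exact ⟨(m, n), h⟩
  · rintro ⟨p, h⟩
    exact ⟨p.1, p.2, h⟩

lemma summable_per : Summable fun p : ℤ × ℤ => ‖L.per p‖⁻¹ ^ 3 := by
  have h := ZLattice.summable_norm_pow_inv L.pp.lattice 3 (by simp)
  have h2 := L.pp.latticeEquivProd.symm.toEquiv.summable_iff.mpr h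
  refine h2.congr fun p => ?_
  have := L.pp.latticeEquiv_symm_apply p
  change ‖(L.pp.latticeEquivProd.symm p).1‖⁻¹ ^ 3 = _
  rw [this]
  simp [pp, per]

/-- Weierstrass elementary factor. -/
def E (p : ℤ × ℤ) (z : ℂ) : ℂ :=
  (1 - z / L.per p) * Complex.exp (z / L.per p + z ^ 2 / (2 * (L.per p) ^ 2))

lemma E_zero (z : ℂ) : L.E 0 z = 1 := by simp [E, per_zero]

lemma elem_bound (w : ℂ) (hw : ‖w‖ ≤ 1) :
    ‖(1 - w) * Complex.exp (w + w ^ 2 / 2) - 1‖ ≤ Real.exp 2 * ‖w‖ ^ 3 := by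
  have hd : ∀ x ∈ Metric.closedBall (0 : ℂ) ‖w‖,
      HasDerivWithinAt (fun w : ℂ => (1 - w) * Complex.exp (w + w ^ 2 / 2))
        (- x ^ 2 * Complex.exp (x + x ^ 2 / 2)) (Metric.closedBall (0 : ℂ) ‖w‖) x := by
    intro x _
    have h1 : HasDerivAt (fun w : ℂ => 1 - w) (-1) x := by
      simpa using (hasDerivAt_id x).const_sub 1
    have h2 : HasDerivAt (fun w : ℂ => w + w ^ 2 / 2) (1 + x) x := by
      have := (hasDerivAt_id x).add ((hasDerivAt_pow 2 x).div_const 2)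
      exact this.congr_deriv (by simp)
    have := (h1.mul h2.cexp).hasDerivWithinAt (s := Metric.closedBall (0 : ℂ) ‖w‖)
    exact this.congr_deriv (by ring)
  have hb : ∀ x ∈ Metric.closedBall (0 : ℂ) ‖w‖,
      ‖- x ^ 2 * Complex.exp (x + x ^ 2 / 2)‖ ≤ ‖w‖ ^ 2 * Real.exp 2 := by
    intro x hx
    have hx : ‖x‖ ≤ ‖w‖ := by simpa using hx
    rw [norm_mul, norm_neg, norm_pow]
    gcongr
    refine (Complex.norm_exp_le_exp_norm _).trans ?_
    gcongr
    refine (norm_add_le _ _).trans ?_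
    have : ‖x‖ ≤ 1 := hx.trans hw
    have h3 : ‖x ^ 2 / 2‖ ≤ 1 := by
      rw [norm_div, norm_pow]
      norm_num
      nlinarith [norm_nonneg x]
    linarith
  have := Convex.norm_image_sub_le_of_norm_hasDerivWithin_le hd hb (convex_closedBall _ _)
    (x := 0) (y := w) (by simp) (by simp)
  simp at this
  calc _ ≤ _ := this
    _ = _ := by ring

lemma E_eq (p : ℤ × ℤ) (z : ℂ) : L.E p z =
    (1 - z / L.per p) * Complex.exp (z / L.per p + (z / L.per p) ^ 2 / 2) := by
  unfold E
  congr 3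
  rw [div_pow, div_div, mul_comm]

lemma E_bound (R : ℝ) : ∀ᶠ p in cofinite, ∀ z ∈ Metric.ball (0 : ℂ) R,
    ‖L.E p z - 1‖ ≤ Real.exp 2 * R ^ 3 * ‖L.per p‖⁻¹ ^ 3 := by
  have h := (L.summable_per.mul_left (R ^ 3)).tendsto_cofinite_zero.eventually_le_const
    one_pos
  filter_upwards [h] with p hp z hz
  have hz : ‖z‖ < R := by simpa using hz
  have hzR : ‖z / L.per p‖ ≤ R * ‖L.per p‖⁻¹ := by
    rw [norm_div, div_eq_mul_inv]
    gcongr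
  have h1 : ‖z / L.per p‖ ≤ 1 := by
    refine hzR.trans ?_
    rw [← mul_pow] at hp
    by_contra hc
    push Not at hc
    exact absurd hp (not_le.mpr (one_lt_pow₀ hc (by norm_num)))
  rw [E_eq]
  refine (elem_bound _ h1).trans ?_
  rw [mul_assoc, ← mul_pow]
  gcongr

lemma summable_E (z : ℂ) : Summable fun p => ‖L.E p z - 1‖ := by
  refine Summable.of_norm_bounded_eventually
    (L.summable_per.mul_left (Real.exp 2 * (‖z‖ + 1) ^ 3)) ?_
  filter_upwards [L.E_bound (‖z‖ + 1)] with p hp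
  simpa using hp z (by simp)

/-- The reduced sigma function `σ(z)/z`. -/
def s (z : ℂ) : ℂ := ∏' p : ℤ × ℤ, L.E p z

lemma hasProd_E (z : ℂ) : HasProd (fun p => L.E p z) (L.s z) := by
  have := (multipliable_one_add_of_summable (L.summable_E z)).hasProd
  simpa [s] using this

lemma sigma_eq_s4 (z : ℂ) : L.sigma z = z * L.s z := by
  unfold sigma s
  congr 1
  have : Function.mulSupport (fun p => L.E p z) ⊆ {p | p ≠ 0} := by
    intro p hp h0
    apply hp
    subst h0
    exact L.E_zero z
  exact tprod_subtype_eq_of_mulSupport_subset this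

lemma differentiable_s : Differentiable ℂ L.s := by
  intro z
  have h := Summable.hasProdLocallyUniformlyOn_one_add (f := fun p z => L.E p z - 1)
    (K := Metric.ball (0 : ℂ) (‖z‖ + 1)) Metric.isOpen_ball
    (L.summable_per.mul_left (Real.exp 2 * (‖z‖ + 1) ^ 3)) (L.E_bound _)
    (fun p => by unfold E; fun_prop)
  have h2 : DifferentiableOn ℂ (fun x => ∏' p, (1 + (L.E p x - 1))) (Metric.ball (0 : ℂ) (‖z‖ + 1)) := by
    refine TendstoLocallyUniformlyOn.differentiableOn h (.of_forall fun _ => ?_)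
      Metric.isOpen_ball
    unfold E
    fun_prop
  have h3 : L.s = fun x => ∏' p, (1 + (L.E p x - 1)) := by
    funext x; simp [s]
  rw [h3]
  exact h2.differentiableAt (Metric.isOpen_ball.mem_nhds (by simp))

lemma differentiable_sigma : Differentiable ℂ L.sigma := by
  have : L.sigma = fun z => z * L.s z := funext L.sigma_eq_s4
  rw [this]
  exact differentiable_id.mul L.differentiable_s

lemma s_ne_zero (z : ℂ) (h : ∀ p, p ≠ 0 → z ≠ L.per p) : L.s z ≠ 0 := by
  have := tprod_one_add_ne_zero_of_summable (f := fun p => L.E p z - 1) ?_ (L.summable_E z)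
  · simpa [s] using this
  · intro p
    by_cases hp : p = 0
    · subst hp; simp [E_zero]
    · simp only [add_sub_cancel, E]
      refine mul_ne_zero ?_ (Complex.exp_ne_zero _)
      have hp' := mt L.per_eq_zero.mp hp
      rw [sub_ne_zero]
      intro h1
      rw [eq_div_iff hp'] at h1
      exact h p hp (by simpa using h1.symm)

lemma sigma_ne_zero (z : ℂ) (h : ¬ L.mem z) : L.sigma z ≠ 0 := by
  rw [mem_iff_s4] at h
  push Not at h
  rw [sigma_eq_s4]
  refine mul_ne_zero ?_ (L.s_ne_zero z fun p _ => h p)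
  have := h 0
  rwa [per_zero] at this

lemma sigma_zero : L.sigma 0 = 0 := by simp [sigma_eq_s4]

lemma s_neg (z : ℂ) : L.s (-z) = L.s z := by
  unfold s
  rw [← (Equiv.neg (ℤ × ℤ)).tprod_eq]
  congr 1
  funext p
  simp [E, per_neg]

lemma sigma_neg (z : ℂ) : L.sigma (-z) = - L.sigma z := by
  rw [sigma_eq_s4, sigma_eq_s4, s_neg, neg_mul]

/-- Factor including the zero at the origin. -/
def e (z : ℂ) (p : ℤ × ℤ) : ℂ := if p = 0 then z else L.E p z

lemma hasProd_e (z : ℂ) : HasProd (L.e z) (L.sigma z) := by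
  have := (L.hasProd_E z).congr_cofinite₀ (g := L.e z) (s := {0}) (by simp [E_zero])
    (by intro a ha; simp at ha; simp [e, ha])
  have h2 : L.sigma z = L.s z * ((∏ i ∈ {0}, L.e z i) / ∏ i ∈ {0}, L.E i z) := by
    simp [E_zero, e, sigma_eq_s4, mul_comm]
  rw [h2]
  exact this

lemma summable_per_shift (p₀ : ℤ × ℤ) : Summable fun p => ‖L.per p + L.per p₀‖⁻¹ ^ 3 := by
  have := (Equiv.addRight p₀).summable_iff.mpr L.summable_per
  refine this.congr fun p => ?_
  change ‖L.per (p + p₀)‖⁻¹ ^ 3 = _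
  rw [per_add]

lemma cube_aux (x y : ℝ) (hx : 0 ≤ x) (hy : 0 ≤ y) : x * y ^ 2 ≤ x ^ 3 + y ^ 3 := by
  nlinarith [mul_nonneg (add_nonneg hx hy) (sq_nonneg (x - y)), mul_nonneg hx hy,
    mul_nonneg (mul_nonneg hx hy) hx, mul_nonneg (mul_nonneg hx hy) hy, pow_nonneg hx 3, pow_nonneg hy 3]

lemma eventually_ne (p₀ : ℤ × ℤ) : ∀ᶠ p : ℤ × ℤ in cofinite, p ≠ 0 ∧ p + p₀ ≠ 0 := by
  have : ({0, -p₀} : Set (ℤ × ℤ)).Finite := by simp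
  filter_upwards [this.compl_mem_cofinite] with p hp
  simp at hp
  exact ⟨hp.1, fun h => hp.2 (eq_neg_of_add_eq_zero_left h)⟩

lemma quasi (p₀ : ℤ × ℤ) (hp₀ : p₀ ≠ 0) : ∃ k α : ℂ, ∀ z,
    L.sigma (z + L.per p₀) = k * Complex.exp (α * z) * L.sigma z := by
  set ω := L.per p₀ with hω
  have hω0 : ω ≠ 0 := mt L.per_eq_zero.mp hp₀
  let A : ℤ × ℤ → ℂ := fun p => (1 / (L.per p + ω) ^ 2 - 1 / (L.per p) ^ 2) / 2
  let B : ℤ × ℤ → ℂ := fun p => 1 / (L.per p + ω) - 1 / L.per p + ω / (L.per p + ω) ^ 2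
  let D : ℤ × ℤ → ℂ := fun p => if p = 0 then -1 / ω * Complex.exp (3 / 2) else
    if p + p₀ = 0 then ω else L.E (p + p₀) ω
  have hbase : Summable fun p => ‖L.per p‖⁻¹ ^ 3 + ‖L.per p + ω‖⁻¹ ^ 3 :=
    L.summable_per.add (L.summable_per_shift p₀)
  have hA : Summable A := by
    refine Summable.of_norm_bounded_eventually (hbase.mul_left ‖ω‖) ?_
    filter_upwards [eventually_ne p₀] with p hp
    have h1 := mt L.per_eq_zero.mp hp.1
    have h2 : L.per p + ω ≠ 0 := by
      rw [hω, ← per_add]; exact mt L.per_eq_zero.mp hp.2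
    have : A p = ω * ((-1/2) * ((L.per p)⁻¹ * (L.per p + ω)⁻¹ ^ 2) +
        (-1/2) * ((L.per p + ω)⁻¹ * (L.per p)⁻¹ ^ 2)) := by
      simp only [A]
      field_simp
      ring
    rw [this, norm_mul]
    gcongr
    refine (norm_add_le _ _).trans ?_
    simp only [norm_mul, norm_pow, norm_inv]
    have e1 := cube_aux ‖L.per p‖⁻¹ ‖L.per p + ω‖⁻¹ (by positivity) (by positivity)
    have e2 := cube_aux ‖L.per p + ω‖⁻¹ ‖L.per p‖⁻¹ (by positivity) (by positivity)
    norm_num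
    norm_num at e1 e2
    linarith
  have hB : Summable B := by
    refine Summable.of_norm_bounded_eventually (hbase.mul_left (‖ω‖ ^ 2)) ?_
    filter_upwards [eventually_ne p₀] with p hp
    have h1 := mt L.per_eq_zero.mp hp.1
    have h2 : L.per p + ω ≠ 0 := by
      rw [hω, ← per_add]; exact mt L.per_eq_zero.mp hp.2
    have : B p = - ω ^ 2 * ((L.per p)⁻¹ * (L.per p + ω)⁻¹ ^ 2) := by
      simp only [B]
      field_simp
      ring
    rw [this, norm_mul, norm_neg, norm_pow]
    gcongr
    simp only [norm_mul, norm_pow, norm_inv]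
    exact cube_aux ‖L.per p‖⁻¹ ‖L.per p + ω‖⁻¹ (by positivity) (by positivity)
  have hD : Multipliable D := by
    have h1 : Summable fun p => ‖D p - 1‖ := by
      have h2 := (Equiv.addRight p₀).summable_iff.mpr (L.summable_E ω)
      refine h2.congr_cofinite ?_
      filter_upwards [eventually_ne p₀] with p hp
      simp [D, hp.1, hp.2]
    simpa using multipliable_one_add_of_summable h1
  have hA0 : ∑' p, A p = 0 := by
    have h1 : ∑' p, A p = ∑' p, A (-(p + p₀)) :=
      ((Equiv.addRight p₀).trans (Equiv.neg _)).tsum_eq A |>.symm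
    have h2 : ∀ p, A (-(p + p₀)) = - A p := by
      intro p
      simp only [A, per_neg, per_add, ← hω]
      have : -(L.per p + ω) + ω = - L.per p := by ring
      rw [this]
      ring
    simp only [h2, tsum_neg] at h1
    exact self_eq_neg.mp h1
  refine ⟨∏' p, D p, ∑' p, B p, fun z => ?_⟩
  have hE : HasProd (fun p => Complex.exp (A p * z ^ 2 + B p * z))
      (Complex.exp ((∑' p, B p) * z)) := by
    have := ((hA.hasSum.mul_right (z ^ 2)).add (hB.hasSum.mul_right z)).cexp
    rw [hA0] at this
    simpa [Function.comp_def] using this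
  have h3 := (hD.hasProd.mul hE).mul (L.hasProd_e z)
  have h4 := (Equiv.addRight p₀).hasProd_iff.mpr (L.hasProd_e (z + ω))
  refine h4.unique ?_
  convert h3 using 1
  funext p
  simp only [Function.comp, Equiv.coe_addRight]
  by_cases hp : p = 0
  · subst hp
    simp only [e, D, A, B, E, zero_add, hp₀, if_true, if_false, per_zero, ← hω]
    have : 1 - (z + ω) / ω = -1 / ω * z := by field_simp; ring
    rw [this]
    have h5 : (z + ω) / ω + (z + ω) ^ 2 / (2 * ω ^ 2) = 3 / 2 +
       ((1 / ω ^ 2 - 1 / 0 ^ 2) / 2 * z ^ 2 + (1 / ω - 1 / 0 + ω / ω ^ 2) * z) := by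
      simp only [ne_eq, OfNat.ofNat_ne_zero, not_false_eq_true, zero_pow, div_zero, sub_zero]
      field_simp
      ring
    rw [h5, Complex.exp_add]
    ring
  · by_cases hq : p + p₀ = 0
    · have hpp : L.per p = - ω := by
        rw [eq_neg_of_add_eq_zero_left hq, per_neg]
      simp only [e, D, A, B, E, hq, hp, if_true, if_false, hpp]
      have h5 : (1 - z / -ω) = (z + ω) / ω := by field_simp; ring
      have h6 : (1 / (-ω + ω) ^ 2 - 1 / (-ω) ^ 2) / 2 * z ^ 2 +
          (1 / (-ω + ω) - 1 / -ω + ω / (-ω + ω) ^ 2) * z =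
          - (z / -ω + z ^ 2 / (2 * (-ω) ^ 2)) := by
        simp only [neg_add_cancel, ne_eq, OfNat.ofNat_ne_zero, not_false_eq_true, zero_pow, div_zero]
        field_simp
        ring
      rw [h5, h6, Complex.exp_neg]
      have := Complex.exp_ne_zero (z / -ω + z ^ 2 / (2 * (-ω) ^ 2))
      field_simp
    · have h1 := mt L.per_eq_zero.mp hp
      have h2 : L.per p + ω ≠ 0 := by
        rw [hω, ← per_add]; exact mt L.per_eq_zero.mp hq
      simp only [e, D, A, B, E, hq, hp, if_false, per_add, ← hω]
      set l := L.per p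
      have h5 : (1 - (z + ω) / (l + ω)) = (1 - ω / (l + ω)) * (1 - z / l) := by
        field_simp; ring
      have h6 : (z + ω) / (l + ω) + (z + ω) ^ 2 / (2 * (l + ω) ^ 2) =
          (ω / (l + ω) + ω ^ 2 / (2 * (l + ω) ^ 2)) +
          ((1 / (l + ω) ^ 2 - 1 / l ^ 2) / 2 * z ^ 2 +
            (1 / (l + ω) - 1 / l + ω / (l + ω) ^ 2) * z) + (z / l + z ^ 2 / (2 * l ^ 2)) := by
        field_simp; ring
      rw [h5, h6, Complex.exp_add, Complex.exp_add]
      ring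

lemma eventually_ne_zero {S : ℂ → ℂ} (hS : Differentiable ℂ S) (z₁ : ℂ) (hz₁ : S z₁ ≠ 0) (z : ℂ) :
    ∀ᶠ w in 𝓝[≠] z, S w ≠ 0 := by
  rcases (hS.analyticAt z).eventually_eq_zero_or_eventually_ne_zero with h | h
  · exfalso
    have h2 : AnalyticOnNhd ℂ S Set.univ := fun w _ => hS.analyticAt w
    have h3 := h2.eqOn_zero_of_preconnected_of_eventuallyEq_zero isPreconnected_univ
      (Set.mem_univ z) h
    exact hz₁ (h3 (Set.mem_univ z₁))
  · exact h

lemma ratio_const {F S : ℂ → ℂ} (hF : Differentiable ℂ F) (hS : Differentiable ℂ S) (C : ℝ)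
    (hb : ∀ z, ‖F z‖ ≤ C * ‖S z‖) (z₁ : ℂ) (hz₁ : S z₁ ≠ 0) : ∃ c, ∀ z, F z = c * S z := by
  have hC : 0 ≤ C := by
    by_contra hC
    push Not at hC
    have h1 := norm_pos_iff.mpr hz₁
    have := hb z₁
    nlinarith [norm_nonneg (F z₁)]
  have hne : ∀ z, ∀ᶠ w in 𝓝[≠] z, S w ≠ 0 := eventually_ne_zero hS z₁ hz₁
  set q : ℂ → ℂ := fun z => F z / S z with hq
  have hqd : ∀ z, S z ≠ 0 → DifferentiableAt ℂ q z := fun z hz => (hF z).div (hS z) hz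
  have hqb : ∀ z, ‖q z‖ ≤ C := by
    intro z
    by_cases hz : S z = 0
    · simp [hq, hz, hC]
    · rw [hq]
      simp only [norm_div]
      exact (div_le_iff₀ (norm_pos_iff.mpr hz)).mpr (hb z)
  let h : ℂ → ℂ := fun z => limUnder (𝓝[≠] z) q
  have hhq : ∀ z, S z ≠ 0 → h z = q z := fun z hz =>
    ((hqd z hz).continuousAt.tendsto.mono_left nhdsWithin_le_nhds).limUnder_eq
  have hdiff : Differentiable ℂ h := by
    intro z
    have hU : insert z {w | S w ≠ 0} ∈ 𝓝 z := insert_mem_nhds_iff.mpr (hne z)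
    have h1 := Complex.differentiableOn_update_limUnder_of_bddAbove (f := q) hU
      (fun w hw => (hqd w (hw.1.resolve_left hw.2)).differentiableWithinAt)
      ⟨C, by rintro _ ⟨w, _, rfl⟩; exact hqb w⟩
    refine (h1.differentiableAt hU).congr_of_eventuallyEq ?_
    filter_upwards [hU] with w hw
    by_cases hwz : w = z
    · subst hwz
      simp [h]
    · rw [Function.update_of_ne hwz]
      exact hhq w (hw.resolve_left hwz)
  have hhb : ∀ z, ‖h z‖ ≤ C := by
    intro z
    have h1 : Tendsto h (𝓝[≠] z) (𝓝 (h z)) :=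
      (hdiff z).continuousAt.tendsto.mono_left nhdsWithin_le_nhds
    refine le_of_tendsto h1.norm ?_
    filter_upwards [hne z] with w hw
    rw [hhq w hw]
    exact hqb w
  have hbd : Bornology.IsBounded (Set.range h) :=
    isBounded_iff_forall_norm_le.mpr ⟨C, by rintro _ ⟨w, rfl⟩; exact hhb w⟩
  refine ⟨h 0, fun z => ?_⟩
  by_cases hz : S z = 0
  · have := hb z
    simpa [hz] using this
  · rw [hdiff.apply_eq_apply_of_bounded hbd 0 z, hhq z hz, hq]
    field_simp

/-- A centred closed fundamental parallelogram. -/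
def K : Set ℂ := (fun t : ℝ × ℝ => t.1 • L.ω₁ + t.2 • L.ω₂) ''
  (Set.Icc (-1 / 2) (1 / 2) ×ˢ Set.Icc (-1 / 2) (1 / 2))

lemma isCompact_K : IsCompact L.K :=
  (isCompact_Icc.prod isCompact_Icc).image (by fun_prop)

lemma exists_K (z : ℂ) : ∃ κ ∈ L.K, ∃ p, z = κ + L.per p := by
  have hz := L.pp.basis.sum_repr z
  simp only [Fin.sum_univ_two, PeriodPair.basis_zero, PeriodPair.basis_one] at hz
  set a := L.pp.basis.repr z 0
  set b := L.pp.basis.repr z 1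
  refine ⟨_, ⟨(a - round a, b - round b), ⟨?_, ?_⟩, rfl⟩, (round a, round b), ?_⟩
  · have := abs_le.mp (abs_sub_round a)
    constructor <;> simp <;> linarith [this.1, this.2]
  · have := abs_le.mp (abs_sub_round b)
    constructor <;> simp <;> linarith [this.1, this.2]
  · rw [← hz]
    simp [per, pp]
    ring

lemma K_lattice (p : ℤ × ℤ) (hp : L.per p ∈ L.K) : p = 0 := by
  obtain ⟨t, ⟨h1, h2⟩, h3⟩ := hp
  have := L.indep (t.1 - p.1) (t.2 - p.2) (by
    simp only [per] at h3
    simp at h3 ⊢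
    linear_combination h3)
  have e1 : t.1 = p.1 := by linarith [this.1]
  have e2 : t.2 = p.2 := by linarith [this.2]
  simp only [e1, e2, Set.mem_Icc] at h1 h2
  have a1 : -1 < p.1 := by
    have : (-1 : ℝ) < p.1 := by linarith [h1.1]
    exact_mod_cast this
  have a2 : p.1 < 1 := by
    have : (p.1 : ℝ) < 1 := by linarith [h1.2]
    exact_mod_cast this
  have a3 : -1 < p.2 := by
    have : (-1 : ℝ) < p.2 := by linarith [h2.1]
    exact_mod_cast this
  have a4 : p.2 < 1 := by
    have : (p.2 : ℝ) < 1 := by linarith [h2.2]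
    exact_mod_cast this
  ext
  · simp; omega
  · simp; omega

/-- The basic product. -/
def P (a b : ℂ) : ℂ := L.sigma (a + b) * L.sigma (a - b)

lemma P_swap (a b : ℂ) : L.P b a = - L.P a b := by
  unfold P
  rw [show b - a = -(a - b) by ring, sigma_neg, add_comm]
  ring

lemma P_zero_left (b : ℂ) : L.P 0 b = - L.sigma b ^ 2 := by
  simp [P, sigma_neg]; ring

lemma P_self (b : ℂ) : L.P b b = 0 := by
  simp [P, sigma_zero]

lemma P_neg_left (a b : ℂ) : L.P (-a) b = L.P a b := by
  unfold P
  rw [show -a + b = -(a - b) by ring, show -a - b = -(a + b) by ring, sigma_neg, sigma_neg]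
  ring

lemma three_term_zero (a b c : ℂ) (hc : L.sigma c ≠ 0) :
    L.P a b * L.sigma c ^ 2 + L.P b c * L.sigma a ^ 2 + L.P c a * L.sigma b ^ 2 = 0 := by
  have hσ := L.differentiable_sigma
  have hs := L.differentiable_s
  let F : ℂ → ℂ := fun a =>
    L.P a b * L.sigma c ^ 2 + L.P b c * L.sigma a ^ 2 - L.P a c * L.sigma b ^ 2
  have hF : Differentiable ℂ F := by
    simp only [F, P]
    fun_prop
  have heven : ∀ z, F (-z) = F z := by
    intro z
    simp only [F, P_neg_left, sigma_neg]
    ring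
  have hF0 : F 0 = 0 := by
    simp only [F, P_zero_left, sigma_zero]
    ring
  have hF0' : deriv F 0 = 0 := by
    have h1 : deriv (fun z => F (-z)) 0 = - deriv F (-0) := deriv_comp_neg F 0
    rw [funext heven] at h1
    rw [neg_zero] at h1
    exact self_eq_neg.mp h1
  have hdsl : ∀ G : ℂ → ℂ, Differentiable ℂ G → Differentiable ℂ (dslope G 0) := by
    intro G hG
    rw [← differentiableOn_univ] at hG ⊢
    exact (Complex.differentiableOn_dslope univ_mem).mpr hG
  set F2 := dslope (dslope F 0) 0 with hF2
  have hF2d : Differentiable ℂ F2 := hdsl _ (hdsl _ hF)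
  have hFF2 : ∀ z, F z = z ^ 2 * F2 z := by
    intro z
    have h1 := sub_smul_dslope F 0 z
    have h2 := sub_smul_dslope (dslope F 0) 0 z
    rw [dslope_same, hF0'] at h2
    simp only [sub_zero, smul_eq_mul, hF0] at h1 h2
    rw [← h1, ← h2]
    ring
  have hsK : ∀ z ∈ L.K, L.s z ≠ 0 := by
    intro z hz
    refine L.s_ne_zero z fun p hp h => hp (L.K_lattice p (h ▸ hz))
  obtain ⟨C, hC⟩ := L.isCompact_K.exists_bound_of_continuousOn
    (f := fun z => F2 z / L.s z ^ 2) (by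
      refine ContinuousOn.div hF2d.continuous.continuousOn
        (hs.continuous.pow 2).continuousOn fun z hz => pow_ne_zero 2 (hsK z hz))
  have hbK : ∀ z ∈ L.K, ‖F z‖ ≤ C * ‖L.sigma z ^ 2‖ := by
    intro z hz
    have h1 : F z = F2 z / L.s z ^ 2 * L.sigma z ^ 2 := by
      have := hsK z hz
      rw [hFF2, sigma_eq_s4]
      field_simp
    rw [h1, norm_mul]
    gcongr
    exact hC z hz
  have hb : ∀ z, ‖F z‖ ≤ C * ‖L.sigma z ^ 2‖ := by
    intro z
    obtain ⟨κ, hκ, p, rfl⟩ := L.exists_K z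
    by_cases hp : p = 0
    · subst hp
      simpa [per_zero] using hbK κ hκ
    · obtain ⟨k, α, hq⟩ := L.quasi p hp
      have hP : ∀ b, L.P (κ + L.per p) b = (k * Complex.exp (α * κ)) ^ 2 * L.P κ b := by
        intro b
        unfold P
        rw [show κ + L.per p + b = (κ + b) + L.per p by ring,
          show κ + L.per p - b = (κ - b) + L.per p by ring, hq, hq, mul_add, mul_sub,
          Complex.exp_add, Complex.exp_sub]
        have := Complex.exp_ne_zero (α * b)
        field_simp
      have h1 : F (κ + L.per p) = (k * Complex.exp (α * κ)) ^ 2 * F κ := by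
        simp only [F, hP, hq]
        ring
      rw [h1, hq, mul_pow _ (L.sigma κ), norm_mul, norm_mul]
      have := mul_le_mul_of_nonneg_left (hbK κ hκ) (norm_nonneg ((k * Complex.exp (α * κ)) ^ 2))
      linarith
  obtain ⟨m, hm⟩ := ratio_const hF (hσ.pow 2) C hb c (pow_ne_zero 2 hc)
  have hFc : F c = 0 := by
    simp only [F, P_self, L.P_swap b c]
    ring
  have hm0 : m = 0 := by
    have := hm c
    rw [hFc] at this
    simpa [hc] using this.symm
  have := hm a
  rw [hm0] at this
  simp only [F, zero_mul] at this
  rw [L.P_swap a c]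
  linear_combination this

lemma plucker (a b c d e : ℂ) (he : L.sigma e ≠ 0) :
    L.P a b * L.P c d + L.P b c * L.P a d + L.P c a * L.P b d = 0 := by
  have h : ∀ a b, L.P a b = (L.P a e * L.sigma b ^ 2 - L.P b e * L.sigma a ^ 2) / L.sigma e ^ 2 := by
    intro a b
    have := L.three_term_zero a b e he
    rw [L.P_swap a e] at this
    rw [eq_div_iff (pow_ne_zero 2 he)]
    linear_combination this
  rw [h a b, h c d, h b c, h a d, h c a, h b d]
  ring

lemma fay (ξ x1 x2 y1 y2 e : ℂ) (he : L.sigma e ≠ 0) :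
    L.sigma (ξ + (x1 + y1)) * L.sigma (ξ + (x2 + y2)) * (L.sigma (x1 + y2) * L.sigma (x2 + y1)) -
    L.sigma (ξ + (x1 + y2)) * L.sigma (ξ + (x2 + y1)) * (L.sigma (x1 + y1) * L.sigma (x2 + y2)) =
    L.sigma (ξ + (x2 + y2) + (x1 + y1)) * L.sigma ξ * (L.sigma (x1 - x2) * L.sigma (y1 - y2)) := by
  have h := L.plucker (ξ + (x1 + x2 + y1 + y2) / 2) ((x1 + y1 - x2 - y2) / 2)
    ((x1 + x2 + y1 + y2) / 2) ((x1 + y2 - x2 - y1) / 2) e he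
  unfold P at h
  ring_nf at h
  have e1 : L.sigma (-ξ) = - L.sigma ξ := L.sigma_neg ξ
  have e2 : L.sigma (-x2 - y2) = - L.sigma (x2 + y2) := by rw [← sigma_neg]; ring_nf
  rw [e1, e2] at h
  have e3 : ξ + (x2 + y2) + (x1 + y1) = ξ + x1 + x2 + y1 + y2 := by ring
  rw [e3]
  simp only [← add_assoc]
  linear_combination h

/-- The right-hand side of the Frobenius formula. -/
def rhs (n : ℕ) (ξ : ℂ) (x y : Fin n → ℂ) : ℂ :=
  (L.sigma (ξ + ∑ i, (x i + y i)) / L.sigma ξ) *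
        (∏ i, ∏ j ∈ Finset.Ioi i, L.sigma (x i - x j) * L.sigma (y i - y j)) /
        ∏ i, ∏ j, L.sigma (x i + y j)

lemma schur_entry (ξ x0 y0 x1 y1 : ℂ) (hξ : L.sigma ξ ≠ 0) (h00 : L.sigma (x0 + y0) ≠ 0)
    (h01 : L.sigma (x0 + y1) ≠ 0) (h10 : L.sigma (x1 + y0) ≠ 0) (h11 : L.sigma (x1 + y1) ≠ 0)
    (hξ' : L.sigma (ξ + (x0 + y0)) ≠ 0) :
    L.Phi ξ (x1 + y1) - L.Phi ξ (x1 + y0) / L.Phi ξ (x0 + y0) * L.Phi ξ (x0 + y1) =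
    L.sigma (x0 - x1) / L.sigma (x1 + y0) * (L.sigma (y0 - y1) / L.sigma (x0 + y1) *
      L.Phi (ξ + (x0 + y0)) (x1 + y1)) := by
  have h := L.fay ξ x1 x0 y1 y0 ξ hξ
  have e1 : L.sigma (x0 - x1) = - L.sigma (x1 - x0) := by rw [← sigma_neg]; ring_nf
  have e2 : L.sigma (y0 - y1) = - L.sigma (y1 - y0) := by rw [← sigma_neg]; ring_nf
  rw [e1, e2]
  unfold Phi
  field_simp
  linear_combination h

lemma rhs_succ (n : ℕ) (ξ : ℂ) (x y : Fin (n + 1) → ℂ) (hξ' : L.sigma (ξ + (x 0 + y 0)) ≠ 0) :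
    L.rhs (n + 1) ξ x y = L.Phi ξ (x 0 + y 0) *
      ((∏ i : Fin n, L.sigma (x 0 - x i.succ) / L.sigma (x i.succ + y 0)) *
       ((∏ j : Fin n, L.sigma (y 0 - y j.succ) / L.sigma (x 0 + y j.succ)) *
        L.rhs n (ξ + (x 0 + y 0)) (fun i => x i.succ) (fun j => y j.succ))) := by
  unfold rhs Phi
  simp only [Fin.prod_univ_succ, Fin.sum_univ_succ, Fin.prod_Ioi_zero, Fin.prod_Ioi_succ,
    Finset.prod_mul_distrib, Finset.prod_div_distrib, ← add_assoc] at hξ' ⊢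
  field_simp

lemma frob_generic (n : ℕ)
    (ih : ∀ (ξ : ℂ) (x y : Fin n → ℂ), L.sigma ξ ≠ 0 → (∀ i j, L.sigma (x i + y j) ≠ 0) →
      Matrix.det (Matrix.of fun i j => L.Phi ξ (x i + y j)) = L.rhs n ξ x y)
    (ξ : ℂ) (x y : Fin (n + 1) → ℂ) (hξ : L.sigma ξ ≠ 0)
    (hxy : ∀ i j, L.sigma (x i + y j) ≠ 0) (hξ' : L.sigma (ξ + (x 0 + y 0)) ≠ 0) :
    Matrix.det (Matrix.of fun i j => L.Phi ξ (x i + y j)) = L.rhs (n + 1) ξ x y := by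
  set M : Matrix (Fin (n + 1)) (Fin (n + 1)) ℂ := Matrix.of fun i j => L.Phi ξ (x i + y j) with hM
  have hM0 : M 0 0 ≠ 0 := by
    simp only [hM, Matrix.of_apply, Phi]
    exact div_ne_zero hξ' (mul_ne_zero hξ (hxy 0 0))
  let c : Fin (n + 1) → ℂ := Fin.cons 0 (fun i => M i.succ 0 / M 0 0)
  let B : Matrix (Fin (n + 1)) (Fin (n + 1)) ℂ := Matrix.of fun i j => M i j - c i * M 0 j
  have hB0 : ∀ j, B 0 j = M 0 j := by intro j; simp [B, c]
  have hMB : M.det = B.det := by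
    refine Matrix.det_eq_of_forall_row_eq_smul_add_const c 0 (by simp [c]) ?_
    intro i j
    rw [hB0]
    simp [B]
  have hBc : ∀ i : Fin n, B i.succ 0 = 0 := by
    intro i
    simp only [B, c, Matrix.of_apply, Fin.cons_succ]
    field_simp
    ring
  rw [hMB, Matrix.det_succ_column_zero, Fin.sum_univ_succ]
  simp only [hBc, mul_zero, zero_mul, Finset.sum_const_zero, add_zero]
  have hsub : B.submatrix (Fin.succAbove 0) Fin.succ = Matrix.of fun i j =>
      (L.sigma (x 0 - x i.succ) / L.sigma (x i.succ + y 0)) *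
      (Matrix.of fun (i j : Fin n) => (L.sigma (y 0 - y j.succ) / L.sigma (x 0 + y j.succ)) *
        (Matrix.of fun (i j : Fin n) => L.Phi (ξ + (x 0 + y 0)) (x i.succ + y j.succ)) i j) i j := by
    ext i j
    simp only [Matrix.submatrix_apply, Fin.zero_succAbove, B, c, hM, Matrix.of_apply, Fin.cons_succ]
    exact L.schur_entry ξ (x 0) (y 0) (x i.succ) (y j.succ) hξ (hxy _ _) (hxy _ _) (hxy _ _)
      (hxy _ _) hξ'
  rw [hsub, Matrix.det_mul_column, Matrix.det_mul_row, ih _ _ _ hξ' (fun i j => hxy _ _),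
    L.rhs_succ n ξ x y hξ', hB0]
  simp [hM]

lemma frob (n : ℕ) : ∀ (ξ : ℂ) (x y : Fin n → ℂ), L.sigma ξ ≠ 0 →
    (∀ i j, L.sigma (x i + y j) ≠ 0) →
      Matrix.det (Matrix.of fun i j => L.Phi ξ (x i + y j)) = L.rhs n ξ x y := by
  induction n with
  | zero =>
    intro ξ x y hξ _
    simp [rhs, hξ]
  | succ n ih =>
    intro ξ x y hξ hxy
    have hσ := L.differentiable_sigma.continuous
    have h1 : ContinuousAt
        (fun t => Matrix.det (Matrix.of fun i j => L.Phi t (x i + y j))) ξ := by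
      refine ContinuousAt.comp (g := Matrix.det)
        (f := fun t => Matrix.of fun i j => L.Phi t (x i + y j))
        (continuous_id.matrix_det).continuousAt ?_
      refine continuousAt_pi.mpr fun i => continuousAt_pi.mpr fun j => ?_
      simp only [Matrix.of_apply, Phi]
      exact ContinuousAt.div (by fun_prop) (by fun_prop) (mul_ne_zero hξ (hxy i j))
    have h2 : ContinuousAt (fun t => L.rhs (n + 1) t x y) ξ := by
      unfold rhs
      refine ContinuousAt.div_const (ContinuousAt.mul (ContinuousAt.div ?_ ?_ hξ) ?_) _ <;> fun_prop
    refine tendsto_nhds_unique_of_eventuallyEq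
      (h1.tendsto.mono_left (nhdsWithin_le_nhds (s := {ξ}ᶜ)))
      (h2.tendsto.mono_left nhdsWithin_le_nhds) ?_
    have e1 := eventually_ne_zero L.differentiable_sigma ξ hξ ξ
    have e2 := eventually_ne_zero (S := fun t => L.sigma (t + (x 0 + y 0)))
      (L.differentiable_sigma.comp (differentiable_id.add_const _)) (ξ - (x 0 + y 0))
      (by simpa using hξ) ξ
    filter_upwards [e1, e2] with t ht1 ht2
    exact L.frob_generic n ih t x y ht1 hxy ht2

end EllLattice

/-- The Frobenius formula for the elliptic Cauchy determinant. -/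
theorem frobenius_elliptic_cauchy_det (L : EllLattice) (N : ℕ) (hN : 1 ≤ N)
    (ξ : ℂ) (x y : Fin N → ℂ)
    (hξ : ¬ L.mem ξ) (hxy : ∀ i j, ¬ L.mem (x i + y j))
    (hsum : ¬ L.mem (ξ + ∑ i, (x i + y i))) :
    Matrix.det (Matrix.of fun i j => L.Phi ξ (x i + y j)) =
      (L.sigma (ξ + ∑ i, (x i + y i)) / L.sigma ξ) *
        (∏ i, ∏ j ∈ Finset.Ioi i, L.sigma (x i - x j) * L.sigma (y i - y j)) /
        ∏ i, ∏ j, L.sigma (x i + y j) := by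
  exact L.frob N ξ x y (L.sigma_ne_zero _ hξ) (fun i j => L.sigma_ne_zero _ (hxy i j))
end
end
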